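/- arXiv:2010.09900 — 5 statements merged into one kernel-verified Lean document; each statement's English description precedes it below -/
import Mathlib

section
/- Let k be an algebraically closed field and let n ≥ 1, r ≥ 3 be integers. There exists a dense Zariski-open subset U of the space (Mat_n(k))^{r+1} of (r+1)-tuples of n×n matrices such that for every A = (A_0,…,A_r) ∈ U, there are only finitely many equivalence classes of tuples B = (B_0,…,B_r) ∈ (Mat_n(k))^{r+1} satisfying that det(x_0 B_0 + … + x_r B_r) is a nonzero scalar multiple of det(x_0 A_0 + … + x_r A_r) as polynomials in x_0,…,x_r; here two tuples B, B' are called equivalent if there exist invertible n×n matrices g_1, g_2 with B'_i = g_1 B_i g_2 for every i = 0,…,r. -/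
/-!
Write `c_x(A) = det (∑ l, x l • A l)` for `x ∈ k^{r+1}`; over an infinite field these values carry the
same information as `genCharPoly A`. The case `n = 1` is immediate. For `n ≥ 2` consider the slice of tuples with
`A_0 = 1`, `A_1` diagonal, and superdiagonal entries of `A_2` equal to `1`; a general tuple is equivalent
to a point of the slice.

The differential of `A ↦ (c_x(A))_x` on the slice is injective at one explicit point, where
`∑ x_l A_l = diag (x_0 + x_1 d_i) + diag (x_2 + x_3 d_i) * C` is cyclic bidiagonal, `C` being the cyclic shift (`special_core`,
`special_point`); this is where `r ≥ 3` enters. Injectivity then holds at the generic point, so no nonzero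
derivation of the function field `F` of the slice kills all `c_x`. Thus `F` is unramified, hence
algebraic, over the field generated by the `c_x` (`generic_algebraic`), and every coordinate `p v` satisfies
an equation `q_v` with coefficients polynomial in the `c_x` and constant term not identically zero
(`exists_relation`). Consequently only finitely many points of the slice share the values `c_x` of a point
where these constant terms do not vanish.

It remains to see that *every* `B` with `genCharPoly B` proportional to `genCharPoly A`, for `A` general, is
equivalent to a point of the slice. Invertibility of `B_0` and separability of the characteristic
polynomial of `B_0⁻¹ B_1` can be read off from the determinants, so `B_0 = 1` and `B_1` diagonal can be
achieved (`exists_normal_pair`). If the superdiagonal of `B_2` has no zero, a diagonal conjugation moves `B`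
into the slice. A zero entry at `(i, i + 1)` is excluded because `B_2(i, i+1) * B_2(i+1, i)` is a root of the
equation of the coordinate `(2, i + 1, i)`, whose constant term is nonzero (`relation_superdiag`).
-/

open Matrix

/-- The generalized characteristic polynomial
`P_A(x_0, …, x_r) = det(x_0 A_0 + … + x_r A_r)` of an `(r+1)`-tuple of `n × n` matrices. -/
noncomputable def genCharPoly {k : Type*} [CommRing k] {n r : ℕ}
    (A : Fin (r + 1) → Matrix (Fin n) (Fin n) k) : MvPolynomial (Fin (r + 1)) k :=
  Matrix.det (∑ i : Fin (r + 1), (MvPolynomial.X i : MvPolynomial (Fin (r + 1)) k) •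
    ((A i).map MvPolynomial.C : Matrix (Fin n) (Fin n) (MvPolynomial (Fin (r + 1)) k)))

/-! ### Derivatives of determinants and a transfer principle -/

section general

variable {R : Type*} [CommRing R]

theorem trace_adjugate_mul_eq_sum_row {n : ℕ} (X N : Matrix (Fin n) (Fin n) R) :
    trace (X.adjugate * N) = ∑ i, (X.updateRow i (N i)).det := by
  have h : ∀ i, (X.updateRow i (N i)).det = (N * X.adjugate) i i := by
    intro i
    rw [← cramer_transpose_apply, cramer_eq_adjugate_mulVec, ← adjugate_transpose]
    simp [mulVec, dotProduct, mul_apply, mul_comm]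
  rw [trace_mul_comm]
  simp [trace, h]

theorem trace_adjugate_mul_eq_sum_col {n : ℕ} (X N : Matrix (Fin n) (Fin n) R) :
    trace (X.adjugate * N) = ∑ j, (X.updateCol j (fun i => N i j)).det := by
  have h : ∀ j, (X.updateCol j (fun i => N i j)).det = (X.adjugate * N) j j := by
    intro i
    rw [← cramer_apply, cramer_eq_adjugate_mulVec]
    simp [mulVec, dotProduct, mul_apply]
  simp [trace, h]

theorem derivation_prod {K A ι : Type*} [CommRing K] [CommRing A] [Algebra K A] [DecidableEq ι]
    (D : Derivation K A A) (s : Finset ι) (f : ι → A) :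
    D (∏ i ∈ s, f i) = ∑ i ∈ s, ∏ j ∈ s, Function.update f i (D (f i)) j := by
  induction s using Finset.induction_on with
  | empty => simp
  | insert a s ha ih =>
    rw [Finset.prod_insert ha, D.leibniz, ih, Finset.sum_insert ha, Finset.prod_insert ha]
    rw [smul_eq_mul, smul_eq_mul, add_comm, Finset.mul_sum]
    congr 1
    · rw [Function.update_self, mul_comm]
      congr 1
      exact Finset.prod_congr rfl fun j hj => by
        rw [Function.update_of_ne (by rintro rfl; exact ha hj)]
    · refine Finset.sum_congr rfl fun i hi => ?_
      rw [Finset.prod_insert ha, Function.update_of_ne (by rintro rfl; exact ha hi)]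

/-- Jacobi's formula for an arbitrary derivation. -/
theorem derivation_det {K A : Type*} [CommRing K] [CommRing A] [Algebra K A]
    (D : Derivation K A A) {n : ℕ} (X : Matrix (Fin n) (Fin n) A) :
    D X.det = trace (X.adjugate * X.map D) := by
  rw [trace_adjugate_mul_eq_sum_col, det_apply, map_sum]
  simp_rw [det_apply]
  rw [Finset.sum_comm]
  refine Finset.sum_congr rfl fun σ _ => ?_
  rw [← Finset.smul_sum, Units.smul_def, Units.smul_def, map_zsmul, derivation_prod]
  congr 1
  refine Finset.sum_congr rfl fun i _ => Finset.prod_congr rfl fun j _ => ?_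
  by_cases h : j = i
  · subst h; simp
  · simp [h, Function.update_of_ne]

theorem coeff_zero_of_forall_sum_pow {k : Type*} [Field k] [Infinite k] {n : ℕ} (g : Fin n → k)
    (h : ∀ s : k, s ≠ 0 → ∑ a, g a * s ^ (a : ℕ) = 0) : g = 0 := by
  let p : Polynomial k := ∑ a : Fin n, Polynomial.monomial (a : ℕ) (g a)
  have hp : p = 0 := by
    by_contra hne
    have hsub : ({0}ᶜ : Set k) ⊆ {s | p.IsRoot s} := by
      intro s hs
      simpa [p, Polynomial.IsRoot, Polynomial.eval_finsetSum] using h s hs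
    exact (Set.Finite.infinite_compl (Set.finite_singleton (0:k)))
      ((Polynomial.finite_setOfPred_isRoot hne).subset hsub)
  funext a
  have : p.coeff a = 0 := by rw [hp]; simp
  simpa [p, Polynomial.finsetSum_coeff, Polynomial.coeff_monomial, Fin.val_inj] using this

/-- If the linear system `∑ v, w v * J x v = 0` (`x ∈ Ξ`) over a domain `R` has only the trivial solution
after specialising along `ev : R → k`, then it has only the trivial solution over the fraction field:
a maximal minor that is nonzero after specialisation is nonzero in `R`. -/
theorem generic_independent {k R F σ Ξ : Type*} [Field k] [CommRing R] [IsDomain R] [Field F]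
    [Algebra R F] [IsFractionRing R F] [Fintype σ] [DecidableEq σ] (ev : R →+* k)
    (J : Ξ → σ → R)
    (h : ∀ w : σ → k, (∀ x, ∑ v, w v * ev (J x v) = 0) → w = 0)
    (w : σ → F) (hw : ∀ x, ∑ v, w v * algebraMap R F (J x v) = 0) : w = 0 := by
  classical
  let row : Ξ → σ → k := fun x v => ev (J x v)
  have hspan : Submodule.span k (Set.range row) = ⊤ := by
    -- a functional vanishing on all specialised rows would be a nontrivial solution `w`
    by_contra hne
    obtain ⟨f, hf, hle⟩ := Submodule.exists_le_ker_of_lt_top _ (lt_top_iff_ne_top.2 hne)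
    apply hf
    have hfe : ∀ y : σ → k, f y = ∑ v, f (Pi.single v 1) * y v := by
      intro y
      conv_lhs => rw [← Finset.univ_sum_single y]
      rw [map_sum]
      refine Finset.sum_congr rfl fun v _ => ?_
      rw [mul_comm, ← smul_eq_mul, ← map_smul, ← Pi.single_smul]; simp
    have h0 := h (fun v => f (Pi.single v 1)) fun x => by
      rw [← hfe (row x)]
      exact hle (Submodule.subset_span ⟨x, rfl⟩)
    ext v
    simpa using congrFun h0 v
  obtain ⟨t, ht, htspan, hli⟩ := exists_linearIndependent k (Set.range row)
  let b : Module.Basis t k (σ → k) := Module.Basis.mk hli (by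
    rw [Subtype.range_coe_subtype]; simp [htspan, hspan])
  let e : t ≃ σ := b.indexEquiv (Pi.basisFun k σ)
  have hx : ∀ v : σ, ∃ x, row x = (e.symm v : σ → k) := fun v => ht (e.symm v).2
  choose x hx using hx
  let M : Matrix σ σ R := Matrix.of fun i v => J (x i) v
  have hM : M.det ≠ 0 := by
    intro h0
    have h1 : (M.map ev).det = 0 := by
      rw [← RingHom.mapMatrix_apply, ← RingHom.map_det, h0, map_zero]
    have h2 : LinearIndependent k (M.map ev).row := by
      have : (M.map ev).row = fun v => (e.symm v : σ → k) := by
        funext v; rw [← hx v]; rfl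
      rw [this]
      exact hli.comp _ e.symm.injective
    rw [Matrix.linearIndependent_rows_iff_isUnit, Matrix.isUnit_iff_isUnit_det, h1] at h2
    simp at h2
  have hMF : (M.map (algebraMap R F)).det ≠ 0 := by
    rw [← RingHom.mapMatrix_apply, ← RingHom.map_det]
    simpa using hM
  refine Matrix.eq_zero_of_mulVec_eq_zero hMF ?_
  funext i
  have := hw (x i)
  simpa [mulVec, dotProduct, M, mul_comm] using this

end general

/-! ### Infinitesimal rigidity at a cyclic bidiagonal tuple -/

section special

variable {k : Type*} [Field k] {n : ℕ}

/-- The matrix with entry `l i` at `(i, i)` and entry `m i` at `(i, next i)`; the two are added when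
`next i = i`. For `next i = i + 1` it is cyclic bidiagonal. -/
def bid (next : Fin n → Fin n) (l m : Fin n → k) : Matrix (Fin n) (Fin n) k :=
  Matrix.of fun i j => (if j = i then l i else 0) + (if j = next i then m i else 0)

/-- If row `φ 0` of `X = bid next l (s • m)` vanishes, then `tr (adj X * N)` is the determinant of `X` with
that row replaced by the row of `N`. When it is zero, a kernel vector can be computed recursively along
the chain `φ 0, φ 1, …`, which turns the condition into a polynomial identity in `s` whose
coefficients are nonzero multiples of the entries of that row of `N`. -/
theorem bid_row {n : ℕ} (next : Fin (n + 1) → Fin (n + 1)) (φ : Fin (n + 1) ≃ Fin (n + 1))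
    (hφ : ∀ a : Fin n, next (φ a.succ) = φ a.castSucc)
    (l m : Fin (n + 1) → k) (hl0 : l (φ 0) = 0) (hm0 : m (φ 0) = 0)
    (hl : ∀ i, i ≠ φ 0 → l i ≠ 0) (hm : ∀ i, i ≠ φ 0 → m i ≠ 0) :
    ∃ c : Fin (n + 1) → k, (∀ a, c a ≠ 0) ∧ ∀ (s : k) (N : Matrix (Fin (n + 1)) (Fin (n + 1)) k),
      trace ((bid next l (s • m)).adjugate * N) = 0 →
        ∑ a, N (φ 0) (φ a) * c a * s ^ (a : ℕ) = 0 := by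
  let ρ : ℕ → k := fun b => -m (φ (Fin.ofNat (n + 1) (b + 1))) / l (φ (Fin.ofNat (n + 1) (b + 1)))
  have hof : ∀ a : Fin n, Fin.ofNat (n + 1) ((a : ℕ) + 1) = a.succ := by
    intro a; ext; simp [Fin.ofNat]
  have hφ0 : ∀ a : Fin n, φ a.succ ≠ φ 0 := fun a h => Fin.succ_ne_zero a (φ.injective h)
  refine ⟨fun a => ∏ b ∈ Finset.range a, ρ b, ?_, ?_⟩
  · intro a
    refine Finset.prod_ne_zero_iff.2 fun b hb => ?_
    have hb' : b < n := by have := Finset.mem_range.1 hb; have := a.2; omega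
    have := hof ⟨b, hb'⟩
    simp only at this
    simp only [ρ, this]
    exact div_ne_zero (neg_ne_zero.2 (hm _ (hφ0 _))) (hl _ (hφ0 _))
  · intro s N h
    set X := bid next l (s • m) with hX
    have hrow : X (φ 0) = 0 := by
      funext j
      simp [hX, bid, hl0, hm0]
    rw [trace_adjugate_mul_eq_sum_row, Finset.sum_eq_single (φ 0)] at h
    rotate_left
    · intro i _ hi
      refine det_eq_zero_of_row_eq_zero (φ 0) fun j => ?_
      rw [updateRow_ne hi.symm, hrow]; rfl
    · simp
    -- all rows but `φ 0` determine the kernel vector `u` from `u (φ 0)`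
    obtain ⟨u, hu0, hu⟩ := Matrix.exists_mulVec_eq_zero_iff.2 h
    have hrec : ∀ i, i ≠ φ 0 → l i * u i + s * m i * u (next i) = 0 := by
      intro i hi
      have := congrFun hu i
      simpa [mulVec, dotProduct, updateRow_ne hi, hX, bid, add_mul, Finset.sum_add_distrib]
        using this
    have hua : ∀ a : Fin (n + 1), u (φ a) = (∏ b ∈ Finset.range a, ρ b) * s ^ (a : ℕ) * u (φ 0) := by
      intro a
      induction a using Fin.induction with
      | zero => simp
      | succ a ih =>
        have h1 := hrec _ (hφ0 a)
        rw [hφ, ih] at h1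
        have h2 := hl _ (hφ0 a)
        have : u (φ a.succ) = (-m (φ a.succ) / l (φ a.succ)) * s * u (φ a.castSucc) := by
          rw [ih]
          field_simp
          linear_combination h1
        rw [this, ih, Fin.val_succ, Finset.prod_range_succ, pow_succ]
        simp only [ρ, hof, Fin.val_castSucc]
        ring
    have hu1 : u (φ 0) ≠ 0 := by
      intro h0
      apply hu0
      funext j
      rw [← φ.apply_symm_apply j, hua, h0]; simp
    have hk := congrFun hu (φ 0)
    simp only [mulVec, dotProduct, updateRow_self, Pi.zero_apply] at hk
    rw [← φ.sum_comp] at hk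
    refine mul_right_cancel₀ hu1 ?_
    rw [zero_mul, Finset.sum_mul, ← hk]
    exact Finset.sum_congr rfl fun a _ => by rw [hua a]; ring

theorem bid_transpose {n : ℕ} (l m : Fin (n + 1) → k) :
    (bid (fun i => i + 1) l m)ᵀ = bid (fun i => i - 1) l (fun i => m (i - 1)) := by
  ext i j
  simp only [bid, transpose_apply, of_apply]
  congr 1
  · by_cases h : i = j
    · simp [h]
    · simp [h, Ne.symm h]
  · by_cases h : i = j + 1
    · subst h; simp
    · rw [if_neg h, if_neg]
      rintro rfl
      simp at h

theorem bid_succ_row {n : ℕ} (d e : Fin (n + 1) → k) (hd : Function.Injective d)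
    (he : Function.Injective e) (q : Fin (n + 1)) :
    ∃ c : Fin (n + 1) → k, (∀ a, c a ≠ 0) ∧ ∀ (s : k) (N : Matrix (Fin (n + 1)) (Fin (n + 1)) k),
      trace ((bid (fun i => i + 1) (fun i => d i - d q) (fun i => s * (e i - e q))).adjugate * N) = 0 →
        ∑ a : Fin (n + 1), N q (q - a) * c a * s ^ (a : ℕ) = 0 := by
  have := bid_row (fun i => i + 1) (Equiv.subLeft q)
    (by intro a; simp [Equiv.subLeft]; rw [← Fin.coeSucc_eq_succ]; abel)
    (fun i => d i - d q) (fun i => e i - e q) (by simp) (by simp)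
    (by intro i hi; simpa [sub_eq_zero, hd.eq_iff] using hi)
    (by intro i hi; simpa [sub_eq_zero, he.eq_iff] using hi)
  simpa [Pi.smul_def] using this

/-- The column analogue of `bid_succ_row`, obtained by transposition. -/
theorem bid_succ_col {n : ℕ} (d e : Fin (n + 1) → k) (hd : Function.Injective d)
    (he : Function.Injective e) (q : Fin (n + 1)) :
    ∃ c : Fin (n + 1) → k, (∀ a, c a ≠ 0) ∧ ∀ (s : k) (N : Matrix (Fin (n + 1)) (Fin (n + 1)) k),
      trace ((bid (fun i => i + 1) (fun i => d i - d q)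
        (fun i => s * (e i - e (q - 1)))).adjugate * N) = 0 →
        ∑ a : Fin (n + 1), N (q + a) q * c a * s ^ (a : ℕ) = 0 := by
  obtain ⟨c, hc, h⟩ := bid_row (fun i => i - 1) (Equiv.addLeft q)
    (by intro a; simp [Equiv.addLeft]; rw [← Fin.coeSucc_eq_succ]; abel)
    (fun i => d i - d q) (fun i => e (i - 1) - e (q - 1)) (by simp) (by simp)
    (by intro i hi; simpa [sub_eq_zero, hd.eq_iff] using hi)
    (by intro i hi; simpa [sub_eq_zero, he.eq_iff] using hi)
  refine ⟨c, hc, fun s N hN => ?_⟩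
  have := h s Nᵀ (by
    rw [← hN, ← trace_transpose, transpose_mul, transpose_transpose, adjugate_transpose,
      trace_mul_comm]
    congr 3
    rw [← transpose_inj, transpose_transpose, bid_transpose]
    rfl)
  simpa using this

end special

section special_infinite

variable {k : Type*} [Field k] [Infinite k]

/-- A constant direction `N` annihilated by all adjugates of the cyclic bidiagonal pencil is zero;
this handles the matrices of index at least `4`. -/
theorem special_extra {n : ℕ} (d e : Fin (n + 1) → k) (hd : Function.Injective d)
    (he : Function.Injective e) (N : Matrix (Fin (n + 1)) (Fin (n + 1)) k)
    (h : ∀ x₀ x₁ y z : k, trace ((bid (fun i => i + 1) (fun i => x₀ + x₁ * d i)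
      (fun i => y + z * e i)).adjugate * N) = 0) : N = 0 := by
  ext i j
  obtain ⟨c, hc, hr⟩ := bid_succ_row d e hd he i
  have hz := coeff_zero_of_forall_sum_pow (fun a => N i (i - a) * c a) fun s _ => hr s N (by
    rw [← h (-d i) 1 (-(s * e i)) s]
    congr 4 <;> · funext a; ring)
  have := congrFun hz (i - j)
  simpa [hc] using this

/-- Infinitesimal rigidity of the pencil `(x₀ + x₁ diag(d)) + (y + z diag(e)) C`, `C` the cyclic shift, against
first-order deformations of the slice. Choosing `(x₀, x₁, y, z)` so that row `i` vanishes gives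
`N₃ i j = e i * N₂ i j`; making column `j` vanish gives `N₃ i j = e (j - 1) * N₂ i j`. So `N₂` is
supported on the cyclic superdiagonal, where the slice leaves only the corner entry, and this entry is
up to sign the value of the trace at `(x₀, x₁, y, z) = (0, 0, 1, 0)`. -/
theorem special_core {m : ℕ} (d e : Fin (m + 2) → k) (hd : Function.Injective d)
    (he : Function.Injective e) (N₁ N₂ N₃ : Matrix (Fin (m + 2)) (Fin (m + 2)) k)
    (hN₁ : ∀ i j, i ≠ j → N₁ i j = 0) (hN₂ : ∀ i j : Fin (m + 2), (j : ℕ) = i + 1 → N₂ i j = 0)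
    (h : ∀ x₀ x₁ y z : k, trace ((bid (fun i => i + 1) (fun i => x₀ + x₁ * d i)
      (fun i => y + z * e i)).adjugate * (x₁ • N₁ + y • N₂ + z • N₃)) = 0) :
    N₁ = 0 ∧ N₂ = 0 ∧ N₃ = 0 := by
  -- at `(-d i, 1, -s * e i, s)` row `i` of the pencil vanishes
  have hrow : ∀ i, N₁ i i = 0 ∧ ∀ j, N₃ i j = e i * N₂ i j := by
    intro i
    obtain ⟨c, hc, hr⟩ := bid_succ_row d e hd he i
    have key : ∀ s : k, N₁ i i * c 0 + s * ∑ a, ((N₃ i (i - a) - e i * N₂ i (i - a)) * c a)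
        * s ^ (a : ℕ) = 0 := by
      intro s
      have h1 := hr s ((1 : k) • N₁ + (-(s * e i)) • N₂ + s • N₃) (by
        rw [← h (-d i) 1 (-(s * e i)) s]
        congr 4 <;> · funext a; ring)
      have h2 : ∑ a : Fin (m + 2), N₁ i (i - a) * c a * s ^ (a : ℕ) = N₁ i i * c 0 := by
        rw [Finset.sum_eq_single 0]
        · simp
        · intro a _ ha
          rw [hN₁ i (i - a) (by intro hh; exact ha (by simpa using hh.symm))]; simp
        · simp
      rw [← h2, Finset.mul_sum, ← Finset.sum_add_distrib, ← h1]
      refine Finset.sum_congr rfl fun a _ => ?_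
      simp only [Matrix.add_apply, Matrix.smul_apply, smul_eq_mul]
      ring
    have h0 : N₁ i i = 0 := by simpa [hc] using key 0
    refine ⟨h0, fun j => ?_⟩
    have hz := coeff_zero_of_forall_sum_pow
      (fun a => (N₃ i (i - a) - e i * N₂ i (i - a)) * c a) fun s hs => by
        simpa [h0, hs] using key s
    have := congrFun hz (i - j)
    simpa [hc, sub_eq_zero] using this
  have h1 : N₁ = 0 := by
    ext i j
    by_cases hij : i = j
    · subst hij; exact (hrow i).1
    · exact hN₁ i j hij
  -- at `(-d j, 1, -s * e (j - 1), s)` column `j` of the pencil vanishes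
  have hcol : ∀ i j, N₃ i j = e (j - 1) * N₂ i j := by
    intro i j
    obtain ⟨c, hc, hr⟩ := bid_succ_col d e hd he j
    have hz := coeff_zero_of_forall_sum_pow
      (fun a => (N₃ (j + a) j - e (j - 1) * N₂ (j + a) j) * c a) fun s hs => by
        have h2 := hr s ((1 : k) • N₁ + (-(s * e (j - 1))) • N₂ + s • N₃) (by
          rw [← h (-d j) 1 (-(s * e (j - 1))) s]
          congr 4 <;> · funext a; ring)
        refine mul_left_cancel₀ hs ?_
        rw [mul_zero, ← h2, Finset.mul_sum]
        refine Finset.sum_congr rfl fun a _ => ?_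
        simp only [Matrix.add_apply, Matrix.smul_apply, smul_eq_mul, h1, Matrix.zero_apply]
        ring
    have := congrFun hz (i - j)
    simpa [hc, sub_eq_zero] using this
  have hoff : ∀ i j, j ≠ i + 1 → N₂ i j = 0 := by
    intro i j hij
    have h2 : (e i - e (j - 1)) * N₂ i j = 0 := by
      rw [sub_mul, ← (hrow i).2 j, ← hcol i j, sub_self]
    rcases mul_eq_zero.1 h2 with h3 | h3
    · exact absurd (by rw [he (sub_eq_zero.1 h3)]; simp) hij
    · exact h3
  have hlast : ∀ i j, i ≠ Fin.last (m + 1) → N₂ i j = 0 := by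
    intro i j hi
    by_cases hij : j = i + 1
    · exact hN₂ i j (by rw [hij, Fin.val_add_one_of_lt (Fin.lt_last_iff_ne_last.2 hi)])
    · exact hoff i j hij
  have hcorner : N₂ (Fin.last (m + 1)) 0 = 0 := by
    have h2 := h 0 0 1 0
    have hrow2 : N₂ (Fin.last (m + 1)) = N₂ (Fin.last (m + 1)) 0 •
        ((finRotate (m + 2)).permMatrix k) (Fin.last (m + 1)) := by
      funext j
      by_cases hj : j = 0
      · subst hj; simp [Equiv.Perm.permMatrix]
      · rw [hoff _ j (by simpa using hj)]
        simp [Equiv.Perm.permMatrix, hj]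
    have hX : bid (fun i => i + 1) (fun i => (0 : k) + 0 * d i) (fun i => 1 + 0 * e i)
        = (finRotate (m + 2)).permMatrix k := by
      ext i j
      simp [bid, Equiv.Perm.permMatrix, PEquiv.toMatrix_apply, eq_comm]
    rw [hX, trace_adjugate_mul_eq_sum_row, Finset.sum_eq_single (Fin.last (m + 1))] at h2
    rotate_left
    · intro i _ hi
      refine det_eq_zero_of_row_eq_zero i fun j => ?_
      simp [hlast i j hi]
    · simp
    have h3 : ((0 : k) • N₁ + (1 : k) • N₂ + (0 : k) • N₃) = N₂ := by simp
    rw [h3, hrow2, det_updateRow_smul, updateRow_eq_self, Matrix.det_permutation] at h2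
    rcases mul_eq_zero.1 h2 with h4 | h4
    · exact h4
    · exfalso
      rcases Int.units_eq_one_or (Equiv.Perm.sign (finRotate (m + 2))) with h5 | h5 <;>
        simp [h5] at h4
  have h2 : N₂ = 0 := by
    ext i j
    by_cases hi : i = Fin.last (m + 1)
    · subst hi
      by_cases hj : j = 0
      · subst hj; exact hcorner
      · exact hoff _ _ (by simpa using hj)
    · exact hlast i j hi
  refine ⟨h1, h2, ?_⟩
  ext i j
  rw [(hrow i).2 j, h2]; simp

end special_infinite

/-! ### The slice of normalised tuples -/

section slice

variable {n r : ℕ}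

/-- The position `(l, i, j)` (entry `(i, j)` of the matrix `A_l`) is free in the slice of tuples with
`A_0 = 1`, `A_1` diagonal and all superdiagonal entries of `A_2` equal to `1`. -/
def Free (q : Fin (r + 1) × Fin n × Fin n) : Prop :=
  (q.1 : ℕ) ≠ 0 ∧ ((q.1 : ℕ) = 1 → q.2.1 = q.2.2) ∧ ((q.1 : ℕ) = 2 → (q.2.2 : ℕ) ≠ q.2.1 + 1)

instance : DecidablePred (Free (n := n) (r := r)) := fun q => by unfold Free; infer_instance

/-- The free positions of the slice, serving as its affine coordinates. -/
abbrev Slot (n r : ℕ) : Type := {q : Fin (r + 1) × Fin n × Fin n // Free q}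

/-- The value that the slice prescribes at a position that is not free (meaningful only there). -/
def base (R : Type*) [CommRing R] (q : Fin (r + 1) × Fin n × Fin n) : R :=
  if (q.1 : ℕ) = 0 then (if q.2.1 = q.2.2 then 1 else 0) else if (q.1 : ℕ) = 1 then 0 else 1

/-- The point of the slice with coordinates `p`. -/
def sl {R : Type*} [CommRing R] (p : Slot n r → R) : Fin (r + 1) → Matrix (Fin n) (Fin n) R :=
  fun l => Matrix.of fun i j => if h : Free (l, i, j) then p ⟨_, h⟩ else base R (l, i, j)

/-- The tangent vector of the slice with coordinates `w`. -/
def dsl {R : Type*} [CommRing R] (w : Slot n r → R) : Fin (r + 1) → Matrix (Fin n) (Fin n) R :=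
  fun l => Matrix.of fun i j => if h : Free (l, i, j) then w ⟨_, h⟩ else 0

/-- The linear combination `∑ l, x l • A l` of the matrices of a tuple. -/
def lin {R : Type*} [CommRing R] (x : Fin (r + 1) → R) (A : Fin (r + 1) → Matrix (Fin n) (Fin n) R) :
    Matrix (Fin n) (Fin n) R := ∑ l, x l • A l

theorem sl_of_eq_base {R : Type*} [CommRing R] (A : Fin (r + 1) → Matrix (Fin n) (Fin n) R)
    (h : ∀ l i j, ¬ Free (l, i, j) → A l i j = base R (l, i, j)) :
    sl (fun v : Slot n r => A v.1.1 v.1.2.1 v.1.2.2) = A := by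
  funext l
  ext i j
  by_cases hf : Free (l, i, j)
  · simp [sl, hf]
  · simp [sl, hf, h]

/-- Some point of the slice (the cyclic bidiagonal one) at which the differential of
`A ↦ (det (∑ l, x l • A l))_x`, restricted to the slice, is injective. -/
theorem special_point {k : Type*} [Field k] [Infinite k] (m t : ℕ) :
    ∃ p : Slot (m + 2) (t + 3) → k, ∀ w : Slot (m + 2) (t + 3) → k,
      (∀ x : Fin (t + 4) → k, trace ((lin x (sl p)).adjugate * lin x (dsl w)) = 0) → w = 0 := by
  let d : Fin (m + 2) → k := fun i => Infinite.natEmbedding k i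
  have hd : Function.Injective d := fun i j h => Fin.ext ((Infinite.natEmbedding k).injective h)
  let A : Fin (t + 4) → Matrix (Fin (m + 2)) (Fin (m + 2)) k :=
    Fin.cons 1 (Fin.cons (diagonal d) (Fin.cons (bid (fun i => i + 1) 0 1)
      (Fin.cons (bid (fun i => i + 1) 0 d) (fun _ => 0))))
  have hA : sl (fun v : Slot (m + 2) (t + 3) => A v.1.1 v.1.2.1 v.1.2.2) = A := by
    refine sl_of_eq_base A ?_
    intro l i j hf
    refine Fin.cases ?_ (fun l => ?_) l hf
    · intro _
      simp [A, base, one_apply]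
    refine Fin.cases ?_ (fun l => ?_) l
    · intro hf
      have : i ≠ j := by simpa [Free] using hf
      simp [A, base, this]
    refine Fin.cases ?_ (fun l => ?_) l
    · intro hf
      have h1 : (j : ℕ) = i + 1 := by
        by_contra hne
        exact hf ⟨Nat.succ_ne_zero 1, fun h => absurd (show (2 : ℕ) = 1 from h) (by decide),
          fun _ => hne⟩
      have h2 : j = i + 1 := by
        ext
        rw [h1, Fin.val_add_one_of_lt]
        rw [Fin.lt_def, Fin.val_last]
        have := j.2
        omega
      have hb : base k ((Fin.succ (Fin.succ 0) : Fin (t + 4)), i, j) = 1 := by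
        change (if (2 : ℕ) = 0 then _ else if (2 : ℕ) = 1 then (0 : k) else 1) = 1
        simp
      change bid (fun i => i + 1) 0 1 i j = base k ((Fin.succ (Fin.succ 0) : Fin (t + 4)), i, j)
      rw [hb]
      simp [bid, h2]
    · intro hf
      exact absurd ⟨by simp, by simp, by simp⟩ hf
  refine ⟨fun v => A v.1.1 v.1.2.1 v.1.2.2, fun w hw => ?_⟩
  rw [hA] at hw
  have hlinA : ∀ (x₀ x₁ y z : k) (u : Fin t → k),
      lin (Fin.cons x₀ (Fin.cons x₁ (Fin.cons y (Fin.cons z u))) : Fin (t + 4) → k) A =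
        bid (fun i => i + 1) (fun i => x₀ + x₁ * d i) (fun i => y + z * d i) := by
    intro x₀ x₁ y z u
    ext i j
    by_cases h1 : i = j
    · subst h1
      simp [lin, Fin.sum_univ_succ, A, bid]
    · simp [lin, Fin.sum_univ_succ, A, bid, h1, Ne.symm h1]
      split_ifs <;> simp
  set N := dsl w with hN
  have hN0 : N 0 = 0 := by
    ext i j; simp [hN, dsl, Free]
  have hlinN : ∀ (x₀ x₁ y z : k) (u : Fin t → k),
      lin (Fin.cons x₀ (Fin.cons x₁ (Fin.cons y (Fin.cons z u))) : Fin (t + 4) → k) N =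
        (x₁ • N 1 + y • N 2 + z • N 3) + ∑ a : Fin t, u a • N a.succ.succ.succ.succ := by
    intro x₀ x₁ y z u
    simp only [lin, Fin.sum_univ_succ, Fin.cons_zero, Fin.cons_succ, hN0, smul_zero, zero_add]
    rw [← add_assoc, ← add_assoc]
    rfl
  obtain ⟨h1, h2, h3⟩ := special_core d d hd hd (N 1) (N 2) (N 3)
    (by intro i j hij; simp [hN, dsl, Free, hij])
    (by
      intro i j hij
      have : ¬ Free (n := m + 2) (r := t + 3) (2, i, j) := by
        intro hf
        exact hf.2.2 rfl hij
      simp [hN, dsl, this])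
    (by
      intro x₀ x₁ y z
      have := hw (Fin.cons x₀ (Fin.cons x₁ (Fin.cons y (Fin.cons z 0))))
      rw [hlinA, hlinN] at this
      simpa using this)
  have h4 : ∀ a : Fin t, N a.succ.succ.succ.succ = 0 := by
    intro a
    refine special_extra d d hd hd _ fun x₀ x₁ y z => ?_
    have := hw (Fin.cons x₀ (Fin.cons x₁ (Fin.cons y (Fin.cons z (Pi.single a 1)))))
    rw [hlinA, hlinN, h1, h2, h3] at this
    simpa [Pi.single_apply, ite_smul] using this
  have hall : ∀ l, N l = 0 := by
    intro l
    refine Fin.cases hN0 (fun l => ?_) l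
    refine Fin.cases h1 (fun l => ?_) l
    refine Fin.cases h2 (fun l => ?_) l
    refine Fin.cases h3 (fun l => ?_) l
    exact h4 l
  funext v
  have := congrFun (congrFun (hall v.1.1) v.1.2.1) v.1.2.2
  simpa [hN, dsl, v.2] using this

end slice

/-! ### The coordinates of the slice are algebraic over the determinants -/

section generic

variable {n r : ℕ}

theorem lin_sl_map {R S : Type*} [CommRing R] [CommRing S] (φ : R →+* S) (x : Fin (r + 1) → R)
    (p : Slot n r → R) : (lin x (sl p)).map φ = lin (φ ∘ x) (sl (φ ∘ p)) := by
  ext i j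
  simp only [lin, Matrix.map_apply, Matrix.sum_apply, Matrix.smul_apply, map_sum, smul_eq_mul,
    map_mul, Function.comp_apply, sl, of_apply]
  refine Finset.sum_congr rfl fun l _ => ?_
  congr 1
  split_ifs
  · rfl
  · simp [base, apply_ite φ]

theorem lin_dsl_map {R S : Type*} [CommRing R] [CommRing S] (φ : R →+* S) (x : Fin (r + 1) → R)
    (w : Slot n r → R) : (lin x (dsl w)).map φ = lin (φ ∘ x) (dsl (φ ∘ w)) := by
  ext i j
  simp only [lin, Matrix.map_apply, Matrix.sum_apply, Matrix.smul_apply, map_sum, smul_eq_mul,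
    map_mul, Function.comp_apply, dsl, of_apply]
  refine Finset.sum_congr rfl fun l _ => ?_
  congr 1
  split_ifs
  · rfl
  · simp

theorem trace_mul_lin_dsl {R : Type*} [CommRing R] (M : Matrix (Fin n) (Fin n) R)
    (x : Fin (r + 1) → R) (w : Slot n r → R) :
    trace (M * lin x (dsl w)) = ∑ v, w v * trace (M * lin x (dsl (Pi.single v 1))) := by
  let T : (Slot n r → R) →ₗ[R] R :=
    { toFun := fun w => trace (M * lin x (dsl w))
      map_add' := by
        intro w w'
        rw [← trace_add, ← mul_add]
        congr 2
        ext i j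
        simp only [lin, Matrix.add_apply, Matrix.sum_apply, Matrix.smul_apply, smul_eq_mul, dsl,
          of_apply, ← Finset.sum_add_distrib, ← mul_add]
        refine Finset.sum_congr rfl fun l _ => ?_
        split_ifs <;> simp
      map_smul' := by
        intro a w
        rw [RingHom.id_apply, ← trace_smul, ← mul_smul_comm]
        congr 2
        ext i j
        simp only [lin, Matrix.sum_apply, Matrix.smul_apply, smul_eq_mul, dsl,
          of_apply, Finset.mul_sum]
        refine Finset.sum_congr rfl fun l _ => ?_
        split_ifs
        · simp [mul_left_comm]
        · simp }
  have := T.pi_apply_eq_sum_univ w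
  simp only [smul_eq_mul] at this
  refine this.trans (Finset.sum_congr rfl fun v _ => ?_)
  congr 1
  change T _ = T _
  congr 1
  funext u
  simp [Pi.single_apply, eq_comm]

open MvPolynomial in
theorem map_generic_pairing {k S : Type*} [Field k] [CommRing S]
    (φ : MvPolynomial (Slot n r) k →+* S) (x : Fin (r + 1) → k) (v : Slot n r) :
    φ (trace ((lin (C ∘ x) (sl X)).adjugate * lin (C ∘ x) (dsl (Pi.single v 1)))) =
      trace ((lin (φ ∘ C ∘ x) (sl (φ ∘ X))).adjugate *
        lin (φ ∘ C ∘ x) (dsl (Pi.single v 1))) := by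
  have h1 : φ ∘ (Pi.single v 1 : Slot n r → MvPolynomial (Slot n r) k) = Pi.single v 1 := by
    funext u
    simp [Pi.single_apply, apply_ite φ]
  rw [← h1, ← lin_sl_map, ← lin_dsl_map, AddMonoidHom.map_trace φ, Matrix.map_mul]
  congr 2
  exact φ.map_adjugate _

open MvPolynomial in
/-- Injectivity of the differential holds at the generic point of the slice, with function field `F`. -/
theorem generic_injective {k : Type*} [Field k] [Infinite k] (m t : ℕ)
    {F : Type*} [Field F] [Algebra k F] [Algebra (MvPolynomial (Slot (m + 2) (t + 3)) k) F]
    [IsScalarTower k (MvPolynomial (Slot (m + 2) (t + 3)) k) F]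
    [IsFractionRing (MvPolynomial (Slot (m + 2) (t + 3)) k) F]
    (w : Slot (m + 2) (t + 3) → F)
    (hw : ∀ x : Fin (t + 4) → k, trace ((lin (algebraMap k F ∘ x) (sl fun v =>
      algebraMap (MvPolynomial (Slot (m + 2) (t + 3)) k) F (X v))).adjugate *
        lin (algebraMap k F ∘ x) (dsl w)) = 0) : w = 0 := by
  obtain ⟨p, hp⟩ := special_point (k := k) m t
  let J : (Fin (t + 4) → k) → Slot (m + 2) (t + 3) → MvPolynomial (Slot (m + 2) (t + 3)) k :=
    fun x v => trace ((lin (C ∘ x) (sl X)).adjugate * lin (C ∘ x) (dsl (Pi.single v 1)))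
  refine generic_independent (eval p) J ?_ w ?_
  · intro w h
    refine hp w fun x => ?_
    rw [trace_mul_lin_dsl, ← h x]
    refine Finset.sum_congr rfl fun v _ => ?_
    simp only [J]
    rw [map_generic_pairing]
    have h1 : eval p ∘ C ∘ x = x := by funext l; simp
    have h2 : eval p ∘ X = p := by funext l; simp
    rw [h1, h2]
  · intro x
    rw [← hw x, trace_mul_lin_dsl]
    refine Finset.sum_congr rfl fun v _ => ?_
    simp only [J]
    rw [map_generic_pairing]
    have : (algebraMap (MvPolynomial (Slot (m + 2) (t + 3)) k) F) ∘ C ∘ x = algebraMap k F ∘ x := by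
      funext l
      exact (IsScalarTower.algebraMap_apply k (MvPolynomial (Slot (m + 2) (t + 3)) k) F _).symm
    rw [this]
    rfl

open MvPolynomial in
/-- The function field `F` of the slice is algebraic over the subalgebra generated by the values
`det (∑ l, x l • A l)`, `x ∈ k^{r+1}`: every derivation of `F` killing these values kills the
coordinates by `generic_injective`, so `F` is formally unramified over the subfield they generate.
This argument is valid in every characteristic. -/
theorem generic_algebraic {k : Type*} [Field k] [Infinite k] (m t : ℕ)
    {F : Type*} [Field F] [Algebra k F] [Algebra (MvPolynomial (Slot (m + 2) (t + 3)) k) F]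
    [IsScalarTower k (MvPolynomial (Slot (m + 2) (t + 3)) k) F]
    [IsFractionRing (MvPolynomial (Slot (m + 2) (t + 3)) k) F] :
    Algebra.IsAlgebraic (Algebra.adjoin k (Set.range fun x : Fin (t + 4) → k =>
      (lin (algebraMap k F ∘ x) (sl fun v =>
      algebraMap (MvPolynomial (Slot (m + 2) (t + 3)) k) F (X v))).det)) F := by
  set c : (Fin (t + 4) → k) → F := fun x => (lin (algebraMap k F ∘ x) (sl fun v =>
      algebraMap (MvPolynomial (Slot (m + 2) (t + 3)) k) F (X v))).det with hc
  let L := IntermediateField.adjoin k (Set.range c)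
  have hder : ∀ δ : Derivation L F F, δ = 0 := by
    intro δ
    have hk : ∀ a : k, δ (algebraMap k F a) = 0 := fun a => δ.map_algebraMap (algebraMap k L a)
    let w : Slot (m + 2) (t + 3) → F := fun v => δ (algebraMap (MvPolynomial (Slot (m + 2) (t + 3)) k) F (X v))
    have hw : w = 0 := by
      refine generic_injective m t (k := k) w fun x => ?_
      have h0 : δ (c x) = 0 :=
        δ.map_algebraMap (⟨c x, IntermediateField.subset_adjoin _ _ ⟨x, rfl⟩⟩ : L)
      rw [hc] at h0
      simp only [derivation_det] at h0
      rw [← h0]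
      congr 2
      ext i j
      simp only [lin, Matrix.map_apply, Matrix.sum_apply, Matrix.smul_apply, map_sum, smul_eq_mul,
        Function.comp_apply, Derivation.leibniz, hk, mul_zero, add_zero, dsl, sl, of_apply]
      refine Finset.sum_congr rfl fun l _ => ?_
      congr 1
      split_ifs with h
      · rfl
      · simp only [base]
        split_ifs <;> simp
    have hR : ∀ f : MvPolynomial (Slot (m + 2) (t + 3)) k, δ (algebraMap _ F f) = 0 := by
      intro f
      induction f using MvPolynomial.induction_on with
      | C a =>
        have := hk a
        rwa [IsScalarTower.algebraMap_apply k (MvPolynomial (Slot (m + 2) (t + 3)) k) F] at this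
      | add p q hp hq => simp [hp, hq]
      | mul_X p v hp =>
        have := congrFun hw v
        simp only [w, Pi.zero_apply] at this
        simp [hp, this]
    ext a
    obtain ⟨f, g, hg, rfl⟩ := IsFractionRing.div_surjective (A := MvPolynomial (Slot (m + 2) (t + 3)) k) a
    simp [Derivation.leibniz_div, hR]
  have : Subsingleton (Ω[F⁄L]) := by
    refine subsingleton_of_forall_eq 0 fun y => ?_
    rw [← Module.forall_dual_apply_eq_zero_iff F]
    intro f
    have : f = 0 := by
      apply (KaehlerDifferential.linearMapEquivDerivation L F (M := F)).injective
      rw [hder (KaehlerDifferential.linearMapEquivDerivation L F f), map_zero]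
    simp [this]
  have : Algebra.FormallyUnramified L F := ⟨this⟩
  have : Algebra.EssFiniteType (MvPolynomial (Slot (m + 2) (t + 3)) k) F :=
    Algebra.EssFiniteType.of_isLocalization F
      (nonZeroDivisors (MvPolynomial (Slot (m + 2) (t + 3)) k))
  have : Algebra.EssFiniteType k F :=
    Algebra.EssFiniteType.comp k (MvPolynomial (Slot (m + 2) (t + 3)) k) F
  have : Algebra.EssFiniteType L F := Algebra.EssFiniteType.of_comp k L F
  have : Algebra.IsSeparable L F := Algebra.FormallyUnramified.isSeparable L F
  have : Algebra.IsAlgebraic L F := inferInstance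
  open IntermediateField.algebraAdjoinAdjoin in
  exact (IsFractionRing.comap_isAlgebraic_iff (A := Algebra.adjoin k (Set.range c)) (K := L)).mpr this

end generic

section relation

open MvPolynomial in
/-- Each coordinate `p v` of the slice satisfies an algebraic equation `q` whose coefficients are polynomials
in the values `x ↦ det (lin x (sl p))` and whose constant term does not vanish identically on the slice. -/
theorem exists_relation {k : Type*} [Field k] [Infinite k] (m t : ℕ) (v : Slot (m + 2) (t + 3)) :
    ∃ q : Polynomial (MvPolynomial (Fin (t + 4) → k) k),
      (∃ h : MvPolynomial (Slot (m + 2) (t + 3)) k, h ≠ 0 ∧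
        ∀ p, eval (fun x => (lin x (sl p)).det) (q.coeff 0) = eval p h) ∧
      ∀ p : Slot (m + 2) (t + 3) → k,
        q.eval₂ (eval fun x => (lin x (sl p)).det) (p v) = 0 := by
  let R := MvPolynomial (Slot (m + 2) (t + 3)) k
  let F := FractionRing R
  let c : (Fin (t + 4) → k) → R := fun x => (lin (C ∘ x) (sl X)).det
  let c' : (Fin (t + 4) → k) → F := fun x => (lin (algebraMap k F ∘ x) (sl fun v =>
      algebraMap R F (X v))).det
  have hcc : ∀ x, algebraMap R F (c x) = c' x := by
    intro x
    simp only [c, c']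
    rw [RingHom.map_det, RingHom.mapMatrix_apply, lin_sl_map]
    congr 2
  have hcp : ∀ p x, eval p (c x) = (lin x (sl p)).det := by
    intro p x
    simp only [c]
    rw [RingHom.map_det, RingHom.mapMatrix_apply, lin_sl_map]
    have h1 : eval p ∘ C ∘ x = x := by funext l; simp
    have h2 : eval p ∘ X = p := by funext l; simp
    rw [h1, h2]
  have halg : Algebra.IsAlgebraic (Algebra.adjoin k (Set.range c')) F := generic_algebraic m t
  have hX : algebraMap R F (X v) ∈ nonZeroDivisors F := by
    rw [mem_nonZeroDivisors_iff_ne_zero]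
    exact (map_ne_zero_iff _ (IsFractionRing.injective R F)).mpr (X_ne_zero v)
  obtain ⟨s, hs0, hs⟩ := (halg.isAlgebraic
    (algebraMap R F (X v))).exists_nonzero_coeff_and_aeval_eq_zero hX
  have hsurj : ∀ a : Algebra.adjoin k (Set.range c'), ∃ g : MvPolynomial (Fin (t + 4) → k) k,
      aeval c' g = (a : F) := by
    intro a
    exact (Algebra.adjoin_range_eq_range_aeval k c').le a.2
  choose g hg using hsurj
  have hgF : ∀ f : MvPolynomial (Fin (t + 4) → k) k, algebraMap R F (aeval c f) = aeval c' f := by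
    intro f
    rw [← aeval_algebraMap_apply]
    congr 2
    funext x
    exact hcc x
  have hgp : ∀ p (f : MvPolynomial (Fin (t + 4) → k) k),
      eval p (aeval c f) = eval (fun x => (lin x (sl p)).det) f := by
    intro p f
    simp only [← hcp]
    induction f using MvPolynomial.induction_on with
    | C a => rw [aeval_C, eval_C]; exact eval_C a
    | add p q hp hq => simp [hp, hq]
    | mul_X p v hp => simp [hp]
  let q : Polynomial (MvPolynomial (Fin (t + 4) → k) k) :=
    ∑ i ∈ Finset.range (s.natDegree + 1), Polynomial.monomial i (g (s.coeff i))
  have hq0 : q.coeff 0 = g (s.coeff 0) := by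
    simp [q, Polynomial.coeff_monomial]
  refine ⟨q, ⟨aeval c (q.coeff 0), ?_, fun p => (hgp p _).symm⟩, fun p => ?_⟩
  · intro h0
    apply hs0
    have := hgF (q.coeff 0)
    rw [h0, hq0, hg, map_zero] at this
    exact Subtype.ext this.symm
  · have hrel : ∑ i ∈ Finset.range (s.natDegree + 1), aeval c (g (s.coeff i)) * X v ^ i = (0 : R) := by
      apply IsFractionRing.injective R F
      rw [map_zero, ← hs, Polynomial.aeval_eq_sum_range, map_sum]
      refine Finset.sum_congr rfl fun i _ => ?_
      rw [map_mul, hgF, hg, map_pow]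
      rfl
    have := congrArg (eval p) hrel
    simp only [map_sum, map_mul, hgp, map_pow, eval_X, map_zero] at this
    rw [← this]
    simp [q, Polynomial.eval₂_finsetSum]

end relation

/-! ### Reaching the slice by conjugation with diagonal matrices -/

section superdiagonal

variable {k : Type*} [Field k]

theorem lin_conj {n r : ℕ} (x : Fin (r + 1) → k) (g h : Matrix (Fin n) (Fin n) k)
    (B : Fin (r + 1) → Matrix (Fin n) (Fin n) k) :
    lin x (fun l => g * B l * h) = g * lin x B * h := by
  simp [lin, Finset.mul_sum, Finset.sum_mul]

theorem det_lin_conj_diagonal {n r : ℕ} (x : Fin (r + 1) → k) (u : Fin n → k) (hu : ∀ i, u i ≠ 0)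
    (B : Fin (r + 1) → Matrix (Fin n) (Fin n) k) :
    (lin x (fun l => diagonal u * B l * diagonal u⁻¹)).det = (lin x B).det := by
  rw [lin_conj, det_mul, det_mul, mul_right_comm, ← det_mul, diagonal_mul_diagonal]
  have : (fun i => u i * u⁻¹ i) = fun _ => 1 := by funext i; simp [hu]
  rw [this]
  simp

/-- A tuple with `B 0 = 1`, `B 1` diagonal and nonvanishing superdiagonal in `B 2` is conjugate into the slice
by a diagonal matrix `u`, where `u i` is the product of the first `i` superdiagonal entries. -/
theorem exists_sl_of_superdiag_ne_zero (m t : ℕ)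
    (B : Fin (t + 4) → Matrix (Fin (m + 2)) (Fin (m + 2)) k) (h0 : B 0 = 1)
    (h1 : ∀ i j, i ≠ j → B 1 i j = 0) (h2 : ∀ i : Fin (m + 1), B 2 i.castSucc i.succ ≠ 0) :
    ∃ u : Fin (m + 2) → k, (∀ i, u i ≠ 0) ∧
      (∀ i : Fin (m + 1), u i.succ = u i.castSucc * B 2 i.castSucc i.succ) ∧
      ∃ p : Slot (m + 2) (t + 3) → k, sl p = fun l => diagonal u * B l * diagonal u⁻¹ := by
  let u : Fin (m + 2) → k :=
    Fin.induction (motive := fun _ => k) 1 (fun i a => a * B 2 i.castSucc i.succ)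
  have husucc : ∀ i : Fin (m + 1), u i.succ = u i.castSucc * B 2 i.castSucc i.succ := fun i => rfl
  have hu : ∀ i, u i ≠ 0 := by
    intro i
    induction i using Fin.induction with
    | zero => exact one_ne_zero
    | succ i ih => rw [husucc]; exact mul_ne_zero ih (h2 i)
  refine ⟨u, hu, husucc, _, sl_of_eq_base (r := t + 3) _ ?_⟩
  intro l i j hf
  have hentry : (diagonal u * B l * diagonal u⁻¹) i j = u i * B l i j * (u j)⁻¹ := by
    simp [Matrix.mul_diagonal, Matrix.diagonal_mul]
  rw [hentry]
  have hl : (l : ℕ) = 0 ∨ (l : ℕ) = 1 ∨ (l : ℕ) = 2 ∨ 3 ≤ (l : ℕ) := by omega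
  rcases hl with hl | hl | hl | hl
  · obtain rfl : l = 0 := Fin.ext hl
    by_cases hij : i = j
    · subst hij
      simp [base, h0, hu]
    · simp [base, h0, hij]
  · have hij : i ≠ j := by
      intro hij
      exact hf ⟨fun h => by simp only at h; omega, fun _ => hij, fun h => by simp only at h; omega⟩
    obtain rfl : l = 1 := Fin.ext hl
    simp [base, h1 i j hij]
  · have hij : (j : ℕ) = i + 1 := by
      by_contra hij
      exact hf ⟨fun h => by simp only at h; omega, fun h => by simp only at h; omega, fun _ => hij⟩
    obtain rfl : l = 2 := Fin.ext hl
    obtain ⟨a, rfl⟩ : ∃ a : Fin (m + 1), i = a.castSucc := ⟨⟨i, by have := j.2; omega⟩, rfl⟩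
    obtain rfl : j = a.succ := Fin.ext hij
    have hb : base k ((2 : Fin (t + 4)), a.castSucc, a.succ) = 1 := by
      simp only [base, hl]
      simp
    rw [hb, ← husucc, mul_inv_cancel₀ (hu _)]
  · exact absurd ⟨by simp only; omega, fun h => by simp only at h; omega,
      fun h => by simp only at h; omega⟩ hf

open MvPolynomial in
theorem relation_of_superdiag_ne_zero {m t : ℕ} (i : Fin (m + 1))
    (v : Slot (m + 2) (t + 3)) (hv : v.1 = (2, i.succ, i.castSucc))
    (q : Polynomial (MvPolynomial (Fin (t + 4) → k) k))
    (hq : ∀ p : Slot (m + 2) (t + 3) → k, q.eval₂ (eval fun x => (lin x (sl p)).det) (p v) = 0)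
    (B : Fin (t + 4) → Matrix (Fin (m + 2)) (Fin (m + 2)) k) (h0 : B 0 = 1)
    (h1 : ∀ i j, i ≠ j → B 1 i j = 0) (h2 : ∀ i : Fin (m + 1), B 2 i.castSucc i.succ ≠ 0) :
    q.eval₂ (eval fun x => (lin x B).det) (B 2 i.castSucc i.succ * B 2 i.succ i.castSucc) = 0 := by
  obtain ⟨u, hu, hus, p, hp⟩ := exists_sl_of_superdiag_ne_zero m t B h0 h1 h2
  rw [← hq p]
  congr 1
  · congr 1
    funext x
    rw [hp]
    exact (det_lin_conj_diagonal (r := t + 3) x u hu B).symm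
  · have h3 : p v = sl p 2 i.succ i.castSucc := by
      have hf : Free (n := m + 2) (r := t + 3) (2, i.succ, i.castSucc) := hv ▸ v.2
      have : v = ⟨(2, i.succ, i.castSucc), hf⟩ := Subtype.ext hv
      simp only [sl, of_apply, hf, dif_pos]
      rw [this]
    rw [h3, hp]
    simp only [Matrix.mul_diagonal, Matrix.diagonal_mul, hus, Pi.inv_apply]
    have := hu i.castSucc
    field_simp

open MvPolynomial in
/-- The equation `q` of the coordinate at position `(2, i + 1, i)` holds for the torus-invariant product
`B 2 i (i+1) * B 2 (i+1) i` on all tuples with `B 0 = 1` and `B 1` diagonal, even if superdiagonal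
entries vanish: perturbing the zero entries by `ε` gives a polynomial in `ε` vanishing for `ε ≠ 0`.
Hence if the constant term of `q` is nonzero at `B`, the superdiagonal entry is nonzero. -/
theorem relation_superdiag [Infinite k] {m t : ℕ} (i : Fin (m + 1))
    (v : Slot (m + 2) (t + 3)) (hv : v.1 = (2, i.succ, i.castSucc))
    (q : Polynomial (MvPolynomial (Fin (t + 4) → k) k))
    (hq : ∀ p : Slot (m + 2) (t + 3) → k, q.eval₂ (eval fun x => (lin x (sl p)).det) (p v) = 0)
    (B : Fin (t + 4) → Matrix (Fin (m + 2)) (Fin (m + 2)) k) (h0 : B 0 = 1)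
    (h1 : ∀ i j, i ≠ j → B 1 i j = 0) :
    q.eval₂ (eval fun x => (lin x B).det) (B 2 i.castSucc i.succ * B 2 i.succ i.castSucc) = 0 := by
  classical
  let E : Fin (t + 4) → Matrix (Fin (m + 2)) (Fin (m + 2)) k := fun l => Matrix.of fun a b =>
    if l = 2 ∧ (b : ℕ) = a + 1 ∧ B 2 a b = 0 then 1 else 0
  let Bε : k → Fin (t + 4) → Matrix (Fin (m + 2)) (Fin (m + 2)) k := fun ε l => B l + ε • E l
  have hε : ∀ ε, ε ≠ 0 → q.eval₂ (eval fun x => (lin x (Bε ε)).det)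
      (Bε ε 2 i.castSucc i.succ * Bε ε 2 i.succ i.castSucc) = 0 := by
    intro ε hε
    have h02 : (0 : Fin (t + 4)) ≠ 2 := fun h => absurd (congrArg Fin.val h) (Nat.zero_ne_add_one 1)
    have h12 : (1 : Fin (t + 4)) ≠ 2 := fun h =>
      absurd (show (1 : ℕ) = 2 from congrArg Fin.val h) (by decide)
    refine relation_of_superdiag_ne_zero i v hv q hq _ ?_ ?_ ?_
    · ext a b
      simp [Bε, E, h0, h02]
    · intro a b hab
      simp [Bε, E, h1 a b hab, h12]
    · intro a
      by_cases hb : B 2 a.castSucc a.succ = 0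
      · simpa [Bε, E, hb] using hε
      · simp [Bε, E, hb]
  let BT : Fin (t + 4) → Matrix (Fin (m + 2)) (Fin (m + 2)) (Polynomial k) := fun l =>
    (B l).map Polynomial.C + (Polynomial.X : Polynomial k) • (E l).map Polynomial.C
  let P : Polynomial k := q.eval₂ (eval₂Hom Polynomial.C fun x => (lin (Polynomial.C ∘ x) BT).det)
    (BT 2 i.castSucc i.succ * BT 2 i.succ i.castSucc)
  have hP : ∀ ε, P.eval ε = q.eval₂ (eval fun x => (lin x (Bε ε)).det)
      (Bε ε 2 i.castSucc i.succ * Bε ε 2 i.succ i.castSucc) := by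
    intro ε
    change Polynomial.evalRingHom ε P = _
    simp only [P]
    rw [Polynomial.hom_eval₂]
    congr 1
    · refine MvPolynomial.ringHom_ext (fun a => by simp) fun x => ?_
      simp only [RingHom.comp_apply, coe_eval₂Hom, eval₂_X, eval_X]
      rw [RingHom.map_det]
      congr 1
      ext a b
      simp [lin, BT, Bε, Matrix.sum_apply, mul_comm ε]
    · simp [BT, Bε, mul_comm ε]
  have hP0 : P = 0 := by
    by_contra hne
    have hsub : ({0}ᶜ : Set k) ⊆ {s | P.IsRoot s} := by
      intro s hs
      exact (hP s).trans (hε s hs)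
    exact (Set.Finite.infinite_compl (Set.finite_singleton (0:k)))
      ((Polynomial.finite_setOfPred_isRoot hne).subset hsub)
  have := hP 0
  rw [hP0, Polynomial.eval_zero] at this
  simpa [Bε] using this.symm

end superdiagonal

/-! ### Diagonalising matrices with separable characteristic polynomial -/

section diagonalization

theorem exists_diagonalization {k : Type*} [Field k] [IsAlgClosed k] {n : ℕ}
    (M : Matrix (Fin n) (Fin n) k) (hM : M.charpoly.Separable) :
    ∃ (P : Matrix (Fin n) (Fin n) k) (d : Fin n → k), IsUnit P ∧ M * P = P * diagonal d := by
  classical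
  have hcard : M.charpoly.roots.toFinset.card = n := by
    rw [Multiset.toFinset_card_of_nodup (Polynomial.nodup_roots hM),
      ← (IsAlgClosed.splits M.charpoly).natDegree_eq_card_roots, charpoly_natDegree_eq_dim,
      Fintype.card_fin]
  let φ := M.charpoly.roots.toFinset.equivFinOfCardEq hcard
  let d : Fin n → k := fun i => (φ.symm i : k)
  have hd : Function.Injective d := Subtype.val_injective.comp φ.symm.injective
  have hev : ∀ i, ∃ v, Module.End.HasEigenvector (Matrix.toLin' M) (d i) v := by
    intro i
    apply Module.End.HasEigenvalue.exists_hasEigenvector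
    rw [Module.End.hasEigenvalue_iff_isRoot_charpoly, Matrix.charpoly_toLin']
    have := (φ.symm i).2
    rw [Multiset.mem_toFinset] at this
    exact Polynomial.isRoot_of_mem_roots this
  choose v hv using hev
  have hli := Module.End.eigenvectors_linearIndependent' (Matrix.toLin' M) d hd v hv
  refine ⟨(Matrix.of v)ᵀ, d, ?_, ?_⟩
  · rw [← Matrix.linearIndependent_cols_iff_isUnit]
    exact hli
  · ext a i
    have := congrFun (hv i).apply_eq_smul a
    simp only [toLin'_apply, Pi.smul_apply, smul_eq_mul] at this
    rw [Matrix.mul_diagonal, Matrix.transpose_apply, of_apply, mul_comm, ← this]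
    rfl

/-- The determinant of the derivative of the characteristic polynomial of `M` evaluated at `M`. Up to
sign this is the discriminant of the characteristic polynomial; this form visibly commutes with ring
homomorphisms. -/
noncomputable def charDiscr {R : Type*} [CommRing R] {n : ℕ} (M : Matrix (Fin n) (Fin n) R) : R :=
  (Polynomial.aeval M M.charpoly.derivative).det

theorem map_charDiscr {R S : Type*} [CommRing R] [CommRing S] (φ : R →+* S) {n : ℕ}
    (M : Matrix (Fin n) (Fin n) R) : φ (charDiscr M) = charDiscr (M.map φ) := by
  unfold charDiscr
  rw [RingHom.map_det, charpoly_map, Polynomial.derivative_map]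
  congr 1
  have := Polynomial.map_aeval_eq_aeval_map (φ := φ) (ψ := φ.mapMatrix (m := Fin n))
    (by ext; simp [Matrix.algebraMap_matrix_apply, apply_ite φ]) M.charpoly.derivative M
  exact this

theorem separable_of_charDiscr {k : Type*} [Field k] [IsAlgClosed k] {n : ℕ}
    (M : Matrix (Fin n) (Fin n) k) (hM : charDiscr M ≠ 0) : M.charpoly.Separable := by
  rw [Polynomial.separable_def, Polynomial.isCoprime_iff_aeval_ne_zero_of_isAlgClosed k k]
  intro μ
  by_contra! h
  obtain ⟨h1, h2⟩ := h
  apply hM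
  rw [Polynomial.coe_aeval_eq_eval] at h1 h2
  have : Module.End.HasEigenvalue (Matrix.toLin' M) μ := by
    rw [Module.End.hasEigenvalue_iff_isRoot_charpoly, Matrix.charpoly_toLin']
    exact h1
  obtain ⟨v, hv⟩ := this.exists_hasEigenvector
  have h3 := Module.End.aeval_apply_of_hasEigenvector (p := M.charpoly.derivative) hv
  unfold charDiscr
  rw [← Matrix.exists_mulVec_eq_zero_iff]
  refine ⟨v, hv.2, ?_⟩
  rw [← toLin'_apply]
  have h4 : (Polynomial.aeval (toLin' M)) M.charpoly.derivative =
      toLin' (Polynomial.aeval M M.charpoly.derivative) :=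
    Polynomial.aeval_algHom_apply (Matrix.toLinAlgEquiv' : Matrix (Fin n) (Fin n) k ≃ₐ[k] _).toAlgHom M _
  rw [← h4, h3, h2, zero_smul]

theorem charDiscr_diagonal_ne_zero {k : Type*} [Field k] {n : ℕ} (d : Fin n → k)
    (hd : Function.Injective d) : charDiscr (diagonal d) ≠ 0 := by
  unfold charDiscr
  have h : Polynomial.aeval (diagonal d) (diagonal d).charpoly.derivative =
      diagonal (fun i => (diagonal d).charpoly.derivative.eval (d i)) := by
    have := Polynomial.aeval_algHom_apply (Matrix.diagonalAlgHom k : (Fin n → k) →ₐ[k] _) d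
      (diagonal d).charpoly.derivative
    refine this.trans ?_
    change diagonal _ = diagonal _
    congr 1
    funext i
    exact (Polynomial.aeval_algHom_apply (Pi.evalAlgHom k (fun _ : Fin n => k) i) d _).symm
  rw [h, det_diagonal, Finset.prod_ne_zero_iff]
  intro i _
  have hs : (diagonal d).charpoly.Separable := by
    rw [charpoly_diagonal, Polynomial.separable_prod_X_sub_C_iff]
    exact hd
  refine hs.eval₂_derivative_ne_zero (RingHom.id k) ?_
  rw [Polynomial.eval₂_id, charpoly_diagonal, Polynomial.eval_prod]
  exact Finset.prod_eq_zero (Finset.mem_univ i) (by simp)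

end diagonalization

section homogenization

open MvPolynomial

/-- Clearing the denominators `e` in `H (c / e)` gives a polynomial `G`. -/
theorem exists_homogenization {k ι τ : Type*} [Field k] (e : MvPolynomial ι k)
    (c : τ → MvPolynomial ι k) (H : MvPolynomial τ k) :
    ∃ (N : ℕ) (G : MvPolynomial ι k), ∀ a : ι → k, eval a e ≠ 0 →
      eval a G = eval a e ^ N * eval (fun x => eval a (c x) / eval a e) H := by
  induction H using MvPolynomial.induction_on with
  | C a => exact ⟨0, C a, fun b _ => by simp⟩
  | add p q hp hq =>
    obtain ⟨N₁, G₁, h₁⟩ := hp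
    obtain ⟨N₂, G₂, h₂⟩ := hq
    refine ⟨N₁ + N₂, e ^ N₂ * G₁ + e ^ N₁ * G₂, fun a ha => ?_⟩
    simp only [map_add, map_mul, map_pow, h₁ a ha, h₂ a ha]
    ring
  | mul_X p x hp =>
    obtain ⟨N, G, h⟩ := hp
    refine ⟨N + 1, G * c x, fun a ha => ?_⟩
    simp only [map_mul, h a ha, eval_X]
    field_simp
    ring

theorem eval_genCharPoly {k : Type*} [Field k] {n r : ℕ}
    (A : Fin (r + 1) → Matrix (Fin n) (Fin n) k) (x : Fin (r + 1) → k) :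
    eval x (genCharPoly A) = (lin x A).det := by
  unfold genCharPoly
  rw [RingHom.map_det]
  congr 1
  ext i j
  simp [lin, Matrix.sum_apply]

end homogenization

/-! ### Finiteness -/

section main

/-- If `B` has the same determinantal form as `A` up to a scalar and `A` is general, then `B` is equivalent to
a tuple starting with the identity and a diagonal matrix: `det (A 0) • (B 0)⁻¹ * B 1` and
`adj (A 0) * A 1` have the same characteristic polynomial. -/
theorem exists_normal_pair {k : Type*} [Field k] [IsAlgClosed k] {n t : ℕ}
    (A B : Fin (t + 4) → Matrix (Fin n) (Fin n) k) (c : k) (hc : c ≠ 0)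
    (hAB : ∀ x, (lin x B).det = c * (lin x A).det) (hA : (A 0).det ≠ 0)
    (hdisc : charDiscr ((A 0).adjugate * A 1) ≠ 0) :
    ∃ g₁ g₂ : Matrix (Fin n) (Fin n) k, IsUnit g₁ ∧ IsUnit g₂ ∧ g₁ * B 0 * g₂ = 1 ∧
      ∀ i j, i ≠ j → (g₁ * B 1 * g₂) i j = 0 := by
  have hlin : ∀ (C : Fin (t + 4) → Matrix (Fin n) (Fin n) k) (a b : k),
      lin (Pi.single 0 a - Pi.single 1 b) C = a • C 0 - b • C 1 := by
    intro C a b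
    simp [lin, sub_smul, Finset.sum_sub_distrib, Pi.single_apply, ite_smul]
  set e := (A 0).det with he
  have hB0 : (B 0).det = c * e := by
    have := hAB (Pi.single 0 1 - Pi.single 1 0)
    rw [hlin, hlin] at this
    simpa using this
  have hB0' : (B 0).det ≠ 0 := by rw [hB0]; exact mul_ne_zero hc hA
  have hBu : IsUnit (B 0).det := isUnit_iff_ne_zero.mpr hB0'
  set M := (A 0).adjugate * A 1
  set M' := e • ((B 0)⁻¹ * B 1) with hM'
  have hchar : M'.charpoly = M.charpoly := by
    refine Polynomial.funext fun s => ?_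
    rw [eval_charpoly, eval_charpoly]
    apply mul_left_cancel₀ hB0'
    rw [← det_mul]
    have hsc : scalar (Fin n) s = s • (1 : Matrix (Fin n) (Fin n) k) := by
      rw [scalar_apply, smul_one_eq_diagonal]
    have h1 : B 0 * (scalar (Fin n) s - M') = s • B 0 - e • B 1 := by
      rw [mul_sub, hM', Matrix.mul_smul, Matrix.mul_nonsing_inv_cancel_left _ _ hBu,
        hsc, Matrix.mul_smul, mul_one]
    have h2 : A 0 * (scalar (Fin n) s - M) = s • A 0 - e • A 1 := by
      rw [mul_sub, ← mul_assoc, mul_adjugate, ← he, smul_mul_assoc, one_mul,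
        hsc, Matrix.mul_smul, mul_one]
    rw [h1, ← hlin, hAB, hlin, ← h2, det_mul, hB0, mul_assoc]
  obtain ⟨P, d, hP, hPd⟩ := exists_diagonalization M' (hchar ▸ separable_of_charDiscr M hdisc)
  have hPu : IsUnit P.det := (Matrix.isUnit_iff_isUnit_det P).mp hP
  refine ⟨P⁻¹ * (B 0)⁻¹, P, ?_, hP, ?_, ?_⟩
  · exact ((Matrix.isUnit_nonsing_inv_iff).mpr hP).mul
      ((Matrix.isUnit_nonsing_inv_iff).mpr ((Matrix.isUnit_iff_isUnit_det _).mpr hBu))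
  · rw [mul_assoc P⁻¹, Matrix.nonsing_inv_mul _ hBu, mul_one, Matrix.nonsing_inv_mul _ hPu]
  · intro i j hij
    have h1 : e • (P⁻¹ * (B 0)⁻¹ * B 1 * P) = diagonal d := by
      have h2 : P⁻¹ * (M' * P) = diagonal d := by
        rw [hPd, Matrix.nonsing_inv_mul_cancel_left _ _ hPu]
      rw [← h2, hM']
      simp only [smul_mul_assoc, Matrix.mul_smul, mul_assoc]
    have h3 := congrFun (congrFun h1 i) j
    rw [Matrix.smul_apply, diagonal_apply_ne _ hij, smul_eq_mul] at h3
    exact (mul_eq_zero.mp h3).resolve_left hA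

theorem sl_map {n r : ℕ} {R S : Type*} [CommRing R] [CommRing S] (φ : R →+* S)
    (p : Slot n r → R) (l : Fin (r + 1)) : (sl p l).map φ = sl (φ ∘ p) l := by
  ext i j
  simp only [Matrix.map_apply, sl, of_apply]
  split_ifs
  · rfl
  · simp [base, apply_ite φ]

theorem sl_zero {n t : ℕ} {R : Type*} [CommRing R] (p : Slot n (t + 3) → R) : sl p 0 = 1 := by
  ext i j
  have : ¬ Free (n := n) (r := t + 3) (0, i, j) := fun h => h.1 rfl
  simp [sl, this, base, one_apply]

theorem sl_one {n t : ℕ} {R : Type*} [CommRing R] (d : Fin n → R) :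
    sl (fun v : Slot n (t + 3) => d v.1.2.1) 1 = diagonal d := by
  ext i j
  by_cases hij : i = j
  · subst hij
    have : Free (n := n) (r := t + 3) (1, i, i) :=
      ⟨by simp, fun _ => rfl, fun h => absurd (show (1 : ℕ) = 2 from h) (by decide)⟩
    simp [sl, this]
  · have : ¬ Free (n := n) (r := t + 3) (1, i, j) := fun h => hij (h.2.1 rfl)
    simp [sl, this, base, hij]

open MvPolynomial in
/-- The theorem for `n = m + 2` and `r = t + 3`, with polynomials compared through their values. -/
theorem finitely_many_aux (k : Type*) [Field k] [IsAlgClosed k] (m t : ℕ) :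
    ∃ f : MvPolynomial (Fin (t + 4) × Fin (m + 2) × Fin (m + 2)) k, f ≠ 0 ∧
      ∀ A : Fin (t + 4) → Matrix (Fin (m + 2)) (Fin (m + 2)) k,
        eval (fun p => A p.1 p.2.1 p.2.2) f ≠ 0 →
        ∃ S : Finset (Fin (t + 4) → Matrix (Fin (m + 2)) (Fin (m + 2)) k),
          ∀ B : Fin (t + 4) → Matrix (Fin (m + 2)) (Fin (m + 2)) k,
            (∃ c : k, c ≠ 0 ∧ ∀ x, (lin x B).det = c * (lin x A).det) →
            ∃ B' ∈ S, ∃ g₁ g₂ : Matrix (Fin (m + 2)) (Fin (m + 2)) k,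
              IsUnit g₁ ∧ IsUnit g₂ ∧ ∀ i, B' i = g₁ * B i * g₂ := by
  classical
  have : Infinite k := IsAlgClosed.instInfinite
  choose q hq hrel using fun v => exists_relation (k := k) m t v
  choose h hh0 hh using hq
  let H : MvPolynomial (Fin (t + 4) → k) k := ∏ v, (q v).coeff 0
  let Ag : Fin (t + 4) → Matrix (Fin (m + 2)) (Fin (m + 2))
      (MvPolynomial (Fin (t + 4) × Fin (m + 2) × Fin (m + 2)) k) :=
    fun l => Matrix.of fun i j => X (l, i, j)
  have hAg : ∀ (A : Fin (t + 4) → Matrix (Fin (m + 2)) (Fin (m + 2)) k) l,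
      (Ag l).map (eval fun p => A p.1 p.2.1 p.2.2) = A l := by
    intro A l
    ext i j
    simp [Ag]
  have hdet : ∀ A : Fin (t + 4) → Matrix (Fin (m + 2)) (Fin (m + 2)) k,
      eval (fun p => A p.1 p.2.1 p.2.2) (Ag 0).det = (A 0).det := by
    intro A
    rw [RingHom.map_det, RingHom.mapMatrix_apply, hAg]
  have hdisc : ∀ A : Fin (t + 4) → Matrix (Fin (m + 2)) (Fin (m + 2)) k,
      eval (fun p => A p.1 p.2.1 p.2.2) (charDiscr ((Ag 0).adjugate * Ag 1)) =
        charDiscr ((A 0).adjugate * A 1) := by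
    intro A
    rw [map_charDiscr, Matrix.map_mul, hAg]
    have := RingHom.map_adjugate (eval fun p => A p.1 p.2.1 p.2.2) (Ag 0)
    simp only [RingHom.mapMatrix_apply, hAg] at this
    rw [this]
  have hval : ∀ (A : Fin (t + 4) → Matrix (Fin (m + 2)) (Fin (m + 2)) k) x,
      eval (fun p => A p.1 p.2.1 p.2.2) (lin (C ∘ x) Ag).det = (lin x A).det := by
    intro A x
    rw [RingHom.map_det]
    congr 1
    ext i j
    simp [lin, Matrix.sum_apply, Ag]
  -- `A` and `B` have proportional determinants; dividing by the value at `(1, 0, …, 0)` removes the scalar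
  obtain ⟨N, G, hG⟩ := exists_homogenization (Ag 0).det (fun x => (lin (C ∘ x) Ag).det) H
  refine ⟨(Ag 0).det * charDiscr ((Ag 0).adjugate * Ag 1) * G, ?_, ?_⟩
  -- each of the three factors is nonzero on the slice, whose coordinate ring is a domain
  · have hΨ : charDiscr (sl (X : Slot (m + 2) (t + 3) → MvPolynomial _ k) 1) ≠ 0 := by
      intro h0
      let d : Fin (m + 2) → k := fun i => Infinite.natEmbedding k i
      have hd : Function.Injective d := fun i j h => Fin.ext ((Infinite.natEmbedding k).injective h)
      have := congrArg (eval fun v : Slot (m + 2) (t + 3) => d v.1.2.1) h0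
      rw [map_charDiscr, sl_map, map_zero] at this
      refine charDiscr_diagonal_ne_zero d hd ?_
      rw [← this, ← sl_one (t := t)]
      congr 2
      funext v
      simp
    have hne : charDiscr (sl (X : Slot (m + 2) (t + 3) → MvPolynomial _ k) 1) * ∏ v, h v ≠ 0 :=
      mul_ne_zero hΨ (Finset.prod_ne_zero_iff.mpr fun v _ => hh0 v)
    obtain ⟨p, hp⟩ : ∃ p, eval p (charDiscr (sl (X : Slot (m + 2) (t + 3) → MvPolynomial _ k) 1) *
        ∏ v, h v) ≠ 0 := by
      by_contra! hall
      exact hne (MvPolynomial.funext fun p => by rw [hall p, map_zero])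
    intro h0
    have hXp : eval p ∘ X = p := by funext v; simp
    rw [map_mul, map_charDiscr, sl_map, hXp, map_prod] at hp
    have h0' := congrArg (eval fun z => sl p z.1 z.2.1 z.2.2) h0
    have hd1 : (sl p 0).det = 1 := by rw [sl_zero]; simp
    rw [map_mul, map_mul, hG _ (by rw [hdet, hd1]; exact one_ne_zero), hdet, hdisc, hd1, map_zero,
      sl_zero, adjugate_one] at h0'
    simp only [hval, div_one, one_pow, one_mul, H, map_prod, hh] at h0'
    exact hp h0'
  · intro A hf
    rw [map_mul, map_mul, hdet, hdisc] at hf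
    have hA0 : (A 0).det ≠ 0 := fun h => hf (by simp [h])
    have hA1 : charDiscr ((A 0).adjugate * A 1) ≠ 0 := fun h => hf (by simp [h])
    have hA2 := right_ne_zero_of_mul hf
    rw [hG _ (by rwa [hdet])] at hA2
    replace hA2 := right_ne_zero_of_mul hA2
    simp only [hval, hdet] at hA2
    set γ : (Fin (t + 4) → k) → k := fun x => (lin x A).det / (A 0).det with hγ
    have hcoeff : ∀ v, eval γ ((q v).coeff 0) ≠ 0 := by
      simp only [H, map_prod] at hA2
      exact fun v => Finset.prod_ne_zero_iff.mp hA2 v (Finset.mem_univ v)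
    refine ⟨(Fintype.piFinset fun v => ((q v).map (eval γ)).roots.toFinset).image sl, ?_⟩
    rintro B ⟨c, hc, hAB⟩
    obtain ⟨g₁, g₂, hg₁, hg₂, hB0, hB1⟩ := exists_normal_pair A B c hc hAB hA0 hA1
    let B' : Fin (t + 4) → Matrix (Fin (m + 2)) (Fin (m + 2)) k := fun l => g₁ * B l * g₂
    have hdetB' : ∀ x, (lin x B').det = γ x := by
      intro x
      have h1 : ∀ x, (lin x B').det = (g₁.det * g₂.det * c) * (lin x A).det := by
        intro x
        simp only [B']
        rw [lin_conj (r := t + 3), det_mul, det_mul, hAB]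
        ring
      have hs : ∀ C : Fin (t + 4) → Matrix (Fin (m + 2)) (Fin (m + 2)) k,
          lin (Pi.single 0 1) C = C 0 := by
        intro C
        simp [lin, Pi.single_apply, ite_smul]
      have h2 := h1 (Pi.single 0 1)
      rw [hs, hs] at h2
      simp only [B'] at h2
      rw [hB0, det_one] at h2
      rw [h1, hγ, eq_div_iff hA0, mul_right_comm, ← h2, one_mul]
    have hsup : ∀ i : Fin (m + 1), B' 2 i.castSucc i.succ ≠ 0 := by
      intro i hi
      have hfree : Free (n := m + 2) (r := t + 3) (2, i.succ, i.castSucc) :=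
        ⟨Nat.succ_ne_zero 1, fun h => absurd (show (2 : ℕ) = 1 from h) (by decide),
          fun _ h => by simp at h; omega⟩
      have := relation_superdiag i ⟨_, hfree⟩ rfl (q ⟨_, hfree⟩) (hrel ⟨_, hfree⟩) B' hB0 hB1
      rw [hi, zero_mul, Polynomial.eval₂_at_zero] at this
      simp only [hdetB'] at this
      exact hcoeff _ this
    obtain ⟨u, hu, -, p, hp⟩ := exists_sl_of_superdiag_ne_zero m t B' hB0 hB1 hsup
    refine ⟨sl p, Finset.mem_image_of_mem _ ?_, diagonal u * g₁, g₂ * diagonal u⁻¹, ?_, ?_, ?_⟩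
    · rw [Fintype.mem_piFinset]
      intro v
      rw [Multiset.mem_toFinset, Polynomial.mem_roots', Polynomial.IsRoot, Polynomial.eval_map]
      refine ⟨fun h0 => hcoeff v ?_, ?_⟩
      · rw [← Polynomial.coeff_map, h0, Polynomial.coeff_zero]
      · rw [← hrel v p]
        congr 2
        funext x
        rw [hp, det_lin_conj_diagonal (r := t + 3) x u hu B', hdetB']
    · refine IsUnit.mul ?_ hg₁
      rw [Matrix.isUnit_iff_isUnit_det, det_diagonal, isUnit_iff_ne_zero]
      exact Finset.prod_ne_zero_iff.mpr fun i _ => hu i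
    · refine hg₂.mul ?_
      rw [Matrix.isUnit_iff_isUnit_det, det_diagonal, isUnit_iff_ne_zero]
      exact Finset.prod_ne_zero_iff.mpr fun i _ => inv_ne_zero (hu i)
    · intro l
      rw [hp]
      simp only [B', mul_assoc]

end main

/-- **Reichstein–Vistoli.** For `r ≥ 3` and `A` an `(r+1)`-tuple of `n × n` matrices in general
position (i.e. in the dense Zariski-open nonvanishing locus of a nonzero polynomial `f` on
the affine space of tuples), there are only finitely many equivalence classes of presentations
of the determinantal hypersurface `H_A`: there is a finite set `S` of tuples such that every
tuple `B` whose generalized characteristic polynomial is a nonzero scalar multiple of that of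
`A` is equivalent (via `B'ᵢ = g₁ Bᵢ g₂` for invertible `g₁, g₂`) to a member of `S`. -/
theorem finitely_many_presentations_of_general_determinantal_hypersurface
    (k : Type*) [Field k] [IsAlgClosed k] (n r : ℕ) (hn : 1 ≤ n) (hr : 3 ≤ r) :
    ∃ f : MvPolynomial (Fin (r + 1) × Fin n × Fin n) k, f ≠ 0 ∧
      ∀ A : Fin (r + 1) → Matrix (Fin n) (Fin n) k,
        MvPolynomial.eval (fun p => A p.1 p.2.1 p.2.2) f ≠ 0 →
        ∃ S : Finset (Fin (r + 1) → Matrix (Fin n) (Fin n) k),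
          ∀ B : Fin (r + 1) → Matrix (Fin n) (Fin n) k,
            (∃ c : k, c ≠ 0 ∧ genCharPoly B = c • genCharPoly A) →
            ∃ B' ∈ S, ∃ g₁ g₂ : Matrix (Fin n) (Fin n) k,
              IsUnit g₁ ∧ IsUnit g₂ ∧ ∀ i, B' i = g₁ * B i * g₂ := by
  have hcond : ∀ (A B : Fin (r + 1) → Matrix (Fin n) (Fin n) k) (c : k),
      genCharPoly B = c • genCharPoly A → ∀ x, (lin x B).det = c * (lin x A).det := by
    intro A B c h x
    rw [← eval_genCharPoly, h, MvPolynomial.smul_eval, eval_genCharPoly]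
  obtain rfl | hn2 := hn.eq_or_lt
  · refine ⟨1, one_ne_zero, fun A _ => ⟨{A}, ?_⟩⟩
    rintro B ⟨c, hc, h⟩
    refine ⟨A, Finset.mem_singleton_self A, c⁻¹ • 1, 1, ?_, isUnit_one, fun l => ?_⟩
    · rw [Matrix.isUnit_iff_isUnit_det]
      simpa using hc
    · have := hcond A B c h (Pi.single l 1)
      simp only [lin, Pi.single_apply, ite_smul, one_smul, zero_smul, Finset.sum_ite_eq',
        Finset.mem_univ, if_true, det_unique] at this
      ext i j
      obtain rfl := Subsingleton.elim i default
      obtain rfl := Subsingleton.elim j default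
      rw [mul_one, Matrix.smul_mul, one_mul, Matrix.smul_apply, this, smul_eq_mul,
        inv_mul_cancel_left₀ hc]
  · obtain ⟨m, rfl⟩ : ∃ m, n = m + 2 := ⟨n - 2, by omega⟩
    obtain ⟨t, rfl⟩ : ∃ t, r = t + 3 := ⟨r - 3, by omega⟩
    obtain ⟨f, hf, hfA⟩ := finitely_many_aux k m t
    refine ⟨f, hf, fun A hA => ?_⟩
    obtain ⟨S, hS⟩ := hfA A hA
    refine ⟨S, fun B hB => ?_⟩
    obtain ⟨c, hc, h⟩ := hB
    exact hS B ⟨c, hc, hcond A B c h⟩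
end

section
/- Let k be an algebraically closed field of characteristic ≠ 2, n ≥ 1, r ≥ 1. Suppose B = (I, B_1,…,B_r) and B' = (I, B'_1,…,B'_r) are reduced (r+1)-tuples of symmetric n×n matrices over k (so B_1 and B'_1 are diagonal with distinct diagonal entries), and suppose g is an invertible n×n matrix with gᵀ B_i g = B'_i for every i = 0,…,r (where B_0 = B'_0 = I). Then g belongs to the subgroup H_n of GL_n(k) generated by the permutation matrices and the diagonal matrices with entries ±1; that is, g is a product of a diagonal ±1 matrix and a permutation matrix. Consequently, the set of reduced tuples equivalent to a fixed tuple A ∈ U_{r,n} is a single H_n-orbit under the action B ↦ hᵀ B h, and in particular is finite. -/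
/-!
Let `d`, `d'` be the diagonals of `B 1` and `B' 1`. The case `i = 0` says that `g` is orthogonal,
`gᵀ g = g gᵀ = 1`, so `gᵀ (B 1) g = B' 1` becomes `(B 1) g = g (B' 1)`, that is
`d i * g i j = g i j * d' j`. Hence `g i j ≠ 0` forces `d i = d' j`. Since `d'` is injective, every
row of `g` has at most one nonzero entry, and since `g gᵀ = 1` it has exactly one, whose square
is `1`; since `d` is injective, these entries lie in different columns
(`isSignedPermMatrix_of_orthogonal`).

If `C` and `C'` are reduced and equivalent to the same `A` through `u` and `v`, then `u⁻¹ v` carries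
`C` to `C'`, so it is a signed permutation matrix. Finiteness follows because there are only
finitely many signed permutation matrices.
-/

open Matrix

/-- The pencil `det(t A₀ − A₁)`, a univariate polynomial in `t`. -/
noncomputable def pencilPoly {k : Type*} [CommRing k] {n : ℕ}
    (A0 A1 : Matrix (Fin n) (Fin n) k) : Polynomial k :=
  Matrix.det ((Polynomial.X : Polynomial k) •
      (A0.map Polynomial.C : Matrix (Fin n) (Fin n) (Polynomial k)) -
    (A1.map Polynomial.C : Matrix (Fin n) (Fin n) (Polynomial k)))

/-- `p` has `n` distinct roots: its set of roots has exactly `n` elements. -/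
def hasNDistinctRoots {k : Type*} [Field k] (p : Polynomial k) (n : ℕ) : Prop :=
  haveI := Classical.decEq k
  p.roots.toFinset.card = n

/-- Membership in `U_{r,n}`: `A₀` is non-singular and `det(t A₀ − A₁)` has `n` distinct
roots. -/
def memU {k : Type*} [Field k] {n r : ℕ}
    (A : Fin (r + 1) → Matrix (Fin n) (Fin n) k) : Prop :=
  (A 0).det ≠ 0 ∧ hasNDistinctRoots (pencilPoly (A 0) (A 1)) n

/-- A tuple of symmetric matrices is reduced if its zeroth entry is the identity matrix and
its first entry is a diagonal matrix with pairwise distinct diagonal entries. -/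
def IsReducedTuple {k : Type*} [CommRing k] {n r : ℕ}
    (B : Fin (r + 1) → Matrix (Fin n) (Fin n) k) : Prop :=
  (∀ i, (B i).IsSymm) ∧ B 0 = 1 ∧
    ∃ d : Fin n → k, Function.Injective d ∧ B 1 = Matrix.diagonal d

/-- `g` lies in the subgroup `H_n ≅ μ₂ⁿ ⋊ Sₙ` of `GL_n` generated by diagonal `±1` matrices
and permutation matrices. -/
def IsSignedPermMatrix {k : Type*} [CommRing k] {n : ℕ}
    (g : Matrix (Fin n) (Fin n) k) : Prop :=
  ∃ ε : Fin n → k, (∀ j, ε j = 1 ∨ ε j = -1) ∧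
    ∃ σ : Equiv.Perm (Fin n), g = Matrix.diagonal ε * σ.permMatrix k

/-- Equivalence of symmetric tuples: `Bᵢ = gᵀ Aᵢ g` for all `i`, for some invertible `g`. -/
def SymmEquiv {k : Type*} [CommRing k] {n r : ℕ}
    (A B : Fin (r + 1) → Matrix (Fin n) (Fin n) k) : Prop :=
  ∃ g : Matrix (Fin n) (Fin n) k, IsUnit g ∧ ∀ i, B i = gᵀ * A i * g

/-- An orthogonal matrix that conjugates a diagonal matrix with distinct entries to another one is
a signed permutation matrix. -/
theorem isSignedPermMatrix_of_orthogonal {k : Type*} [Field k] {n : ℕ}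
    {g : Matrix (Fin n) (Fin n) k} {d d' : Fin n → k}
    (hd : Function.Injective d) (hd' : Function.Injective d')
    (horth : gᵀ * g = 1) (hconj : gᵀ * diagonal d * g = diagonal d') :
    IsSignedPermMatrix g := by
  have horth' : g * gᵀ = 1 := mul_eq_one_comm.mp horth
  have hcomm : diagonal d * g = g * diagonal d' := by
    rw [← hconj, ← Matrix.mul_assoc, ← Matrix.mul_assoc, horth', Matrix.one_mul]
  have hsupp : ∀ i j, g i j ≠ 0 → d i = d' j := by
    intro i j hij
    have h := congrFun (congrFun hcomm i) j
    rw [diagonal_mul, mul_diagonal, mul_comm] at h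
    exact mul_left_cancel₀ hij h
  have hrow : ∀ i, ∑ j, g i j * g i j = 1 := by
    intro i
    have h := congrFun (congrFun horth' i) i
    simpa [Matrix.mul_apply] using h
  have hex : ∀ i, ∃ j, g i j ≠ 0 := by
    intro i
    by_contra! h
    have h1 := hrow i
    simp [h] at h1
  choose s hs using hex
  have hinj : Function.Injective s := by
    intro a b hab
    apply hd
    rw [hsupp a _ (hs a), hsupp b _ (hs b), hab]
  have hzero : ∀ i j, s i ≠ j → g i j = 0 := by
    intro i j hne
    by_contra h
    exact hne (hd' ((hsupp i _ (hs i)).symm.trans (hsupp i j h)))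
  refine ⟨fun i => g i (s i), fun i => ?_,
    Equiv.ofBijective s (Finite.injective_iff_bijective.mp hinj), ?_⟩
  · have h := hrow i
    rw [Finset.sum_eq_single (s i) (fun j _ hj => by simp [hzero i j hj.symm]) (by simp)] at h
    exact mul_self_eq_one_iff.mp h
  · ext i j
    rw [diagonal_mul, Equiv.Perm.permMatrix, PEquiv.toMatrix_apply]
    by_cases h : s i = j
    · subst h
      simp
    · simp [h, hzero i j h]

theorem isSignedPermMatrix_of_reduced {k : Type*} [Field k] {n r : ℕ}
    {B B' : Fin (r + 1) → Matrix (Fin n) (Fin n) k}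
    (hB : IsReducedTuple B) (hB' : IsReducedTuple B') {g : Matrix (Fin n) (Fin n) k}
    (hgB : ∀ i, gᵀ * B i * g = B' i) : IsSignedPermMatrix g := by
  obtain ⟨-, hB0, d, hd, hB1⟩ := hB
  obtain ⟨-, hB0', d', hd', hB1'⟩ := hB'
  have h0 := hgB 0
  have h1 := hgB 1
  rw [hB0, hB0', Matrix.mul_one] at h0
  rw [hB1, hB1'] at h1
  exact isSignedPermMatrix_of_orthogonal hd hd' h0 h1

theorem finite_isSignedPermMatrix (k : Type*) [Field k] (n : ℕ) :
    {h : Matrix (Fin n) (Fin n) k | IsSignedPermMatrix h}.Finite := by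
  have hfin : (Set.univ.pi fun _ : Fin n => ({1, -1} : Set k)).Finite :=
    Set.Finite.pi fun _ => Set.toFinite _
  refine (Set.Finite.image2 (fun ε (σ : Equiv.Perm (Fin n)) => diagonal ε * σ.permMatrix k)
    hfin Set.finite_univ).subset ?_
  rintro h ⟨ε, hε, σ, rfl⟩
  exact ⟨ε, fun j _ => hε j, σ, Set.mem_univ _, rfl⟩

theorem exists_isSignedPermMatrix {k : Type*} [Field k] {n r : ℕ}
    {A C C' : Fin (r + 1) → Matrix (Fin n) (Fin n) k}
    (hC : IsReducedTuple C) (hAC : SymmEquiv A C)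
    (hC' : IsReducedTuple C') (hAC' : SymmEquiv A C') :
    ∃ h : Matrix (Fin n) (Fin n) k, IsSignedPermMatrix h ∧ ∀ i, C' i = hᵀ * C i * h := by
  obtain ⟨u, hu, hCu⟩ := hAC
  obtain ⟨v, -, hCv⟩ := hAC'
  obtain ⟨w, huw⟩ := hu.exists_right_inv
  have hwu : wᵀ * uᵀ = 1 := by rw [← transpose_mul, huw, transpose_one]
  have key : ∀ i, C' i = (w * v)ᵀ * C i * (w * v) := by
    intro i
    calc C' i = vᵀ * A i * v := hCv i
      _ = vᵀ * (wᵀ * uᵀ) * A i * (u * w) * v := by simp [hwu, huw]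
      _ = (w * v)ᵀ * C i * (w * v) := by
        rw [hCu i, transpose_mul]
        simp only [Matrix.mul_assoc]
  exact ⟨w * v, isSignedPermMatrix_of_reduced hC hC' fun i => (key i).symm, key⟩

/-- **Lemma 2.2(b).** If two reduced tuples `B`, `B'` of symmetric matrices satisfy
`gᵀ Bᵢ g = B'ᵢ` for all `i` with `g` invertible, then `g ∈ H_n`, i.e. `g` is a signed
permutation matrix. Consequently, for every `A ∈ U_{r,n}`, the reduced tuples equivalent to
`A` form a single orbit of `H_n` acting by `B ↦ hᵀ B h`; in particular, there are only
finitely many of them. -/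
theorem reduced_tuples_permuted_by_signed_permutations
    (k : Type*) [Field k] [IsAlgClosed k] (hk : ringChar k ≠ 2)
    (n r : ℕ) (hn : 1 ≤ n) (hr : 1 ≤ r)
    (B B' : Fin (r + 1) → Matrix (Fin n) (Fin n) k)
    (hB : IsReducedTuple B) (hB' : IsReducedTuple B')
    (g : Matrix (Fin n) (Fin n) k) (hg : IsUnit g)
    (hgB : ∀ i, gᵀ * B i * g = B' i) :
    IsSignedPermMatrix g ∧
      ∀ A : Fin (r + 1) → Matrix (Fin n) (Fin n) k, (∀ i, (A i).IsSymm) → memU A →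
        ({C : Fin (r + 1) → Matrix (Fin n) (Fin n) k |
            IsReducedTuple C ∧ SymmEquiv A C}.Finite ∧
          ∀ C C' : Fin (r + 1) → Matrix (Fin n) (Fin n) k,
            IsReducedTuple C → SymmEquiv A C → IsReducedTuple C' → SymmEquiv A C' →
            ∃ h : Matrix (Fin n) (Fin n) k, IsSignedPermMatrix h ∧
              ∀ i, C' i = hᵀ * C i * h) := by
  refine ⟨isSignedPermMatrix_of_reduced hB hB' hgB, fun A _ _ => ⟨?_, fun C C' hC hAC hC' hAC' =>
    exists_isSignedPermMatrix hC hAC hC' hAC'⟩⟩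
  rcases Set.eq_empty_or_nonempty {C : Fin (r + 1) → Matrix (Fin n) (Fin n) k |
      IsReducedTuple C ∧ SymmEquiv A C} with hempty | ⟨C, hC, hAC⟩
  · rw [hempty]
    exact Set.finite_empty
  · refine ((finite_isSignedPermMatrix k n).image fun h i => hᵀ * C i * h).subset ?_
    rintro C' ⟨hC', hAC'⟩
    obtain ⟨h, hh, hCh⟩ := exists_isSignedPermMatrix hC hAC hC' hAC'
    exact ⟨h, hh, funext fun i => (hCh i).symm⟩
end

section
/- Let k be a field and n ≥ 1. Suppose g is an n×n matrix over k satisfying gᵀ g = I (g is orthogonal), and suppose D and D' are diagonal n×n matrices, each with n pairwise distinct diagonal entries, such that gᵀ D g = D'. Then g is a signed permutation matrix: g = d·p where p is a permutation matrix and d is a diagonal matrix with diagonal entries ±1. -/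
/-! Since `g` is invertible with inverse `gᵀ`, the hypothesis reads `D g = g D'`, that is,
`d i * g i j = g i j * d' j` entrywise. Hence a nonzero entry `g i j` forces `d i = d' j`.
As `d'` is injective, each row of `g` has at most one nonzero entry; as `g gᵀ = 1`, it has at
least one, in column `s i` say, and its square is `1`. Injectivity of `d` makes `s` injective,
hence a permutation of the finite index set. -/

open Matrix

/-- If an orthogonal matrix `g` (`gᵀ g = 1`) conjugates one diagonal matrix with pairwise
distinct diagonal entries to another (`gᵀ D g = D'`), then `g` is a signed permutation
matrix: `g = d · p` with `p` a permutation matrix and `d` diagonal with entries `±1`. -/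
theorem orthogonal_conj_diagonal_is_signed_perm
    (k : Type*) [Field k] (n : ℕ) (hn : 1 ≤ n)
    (g : Matrix (Fin n) (Fin n) k) (hg : gᵀ * g = 1)
    (d d' : Fin n → k) (hd : Function.Injective d) (hd' : Function.Injective d')
    (h : gᵀ * Matrix.diagonal d * g = Matrix.diagonal d') :
    ∃ ε : Fin n → k, (∀ j, ε j = 1 ∨ ε j = -1) ∧
      ∃ σ : Equiv.Perm (Fin n), g = Matrix.diagonal ε * σ.permMatrix k := by
  have hg' : g * gᵀ = 1 := mul_eq_one_comm.mp hg
  have hcomm : Matrix.diagonal d * g = g * Matrix.diagonal d' := by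
    rw [← h, Matrix.mul_assoc gᵀ, ← Matrix.mul_assoc g, hg', Matrix.one_mul]
  have key : ∀ i j, g i j ≠ 0 → d i = d' j := by
    intro i j hij
    have e := congrFun (congrFun hcomm i) j
    rw [Matrix.diagonal_mul, Matrix.mul_diagonal, mul_comm] at e
    exact mul_left_cancel₀ hij e
  have hrow : ∀ i, ∑ j, g i j * g i j = 1 := by
    intro i
    simpa [Matrix.mul_apply] using congrFun (congrFun hg' i) i
  have hex : ∀ i, ∃ j, g i j ≠ 0 := by
    intro i
    by_contra! hz
    simpa [hz] using hrow i
  choose s hs using hex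
  have hs_inj : Function.Injective s := by
    intro a b hab
    apply hd
    rw [key a _ (hs a), key b _ (hs b), hab]
  have hzero : ∀ i j, j ≠ s i → g i j = 0 := by
    intro i j hj
    by_contra hne
    exact hj (hd' ((key i j hne).symm.trans (key i _ (hs i))))
  refine ⟨fun i => g i (s i), fun i => ?_,
    Equiv.ofBijective s (Finite.injective_iff_bijective.mp hs_inj), ?_⟩
  · apply mul_self_eq_one_iff.mp
    rw [← hrow i, Finset.sum_eq_single (s i)]
    · intro j _ hj
      rw [hzero i j hj, mul_zero]
    · simp
  · ext i j
    rw [Matrix.diagonal_mul, Equiv.Perm.permMatrix, PEquiv.toMatrix_toPEquiv_apply,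
      Equiv.ofBijective_apply]
    by_cases hj : j = s i
    · simp [hj]
    · simp [hj, hzero i j hj]
end

section
/- Let k be an algebraically closed field of characteristic ≠ 2, n ≥ 1, r ≥ 1, and let A = (A_0,…,A_r) be an (r+1)-tuple of symmetric n×n matrices with A_0 non-singular and det(t A_0 − A_1) having n distinct roots. Then the following are equivalent: (i) there are only finitely many equivalence classes of tuples B ∈ (Symm_n(k))^{r+1} such that det(x_0 B_0 + … + x_r B_r) is a nonzero scalar multiple of det(x_0 A_0 + … + x_r A_r); (ii) there are only finitely many reduced tuples B = (I, B_1,…,B_r) ∈ (Symm_n(k))^{r+1} such that det(x_0 I + x_1 B_1 + … + x_r B_r) is a nonzero scalar multiple of det(x_0 A_0 + … + x_r A_r). -/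
/-!
Equivalence over an algebraically closed field brings a tuple `B` with `P_B ∈ kˣ · P_A` to reduced
form: specialising `P_B` shows that `B₀` is invertible and that the pencil `det(t B₀ - B₁)` has the
same `n` distinct roots as that of `A`. Eigenvectors of the pencil for distinct roots are linearly
independent and orthogonal for `B₀`, so after rescaling by square roots they form a matrix `g` with
`gᵀ B₀ g = 1` and `gᵀ B₁ g` diagonal (`exists_reducing`). Hence finitely many reduced tuples give
finitely many classes.

Conversely, each class contains finitely many reduced tuples. The diagonal of `B₁` consists of roots
of the pencil of `A`, so there are finitely many choices for it; and two equivalent reduced tuples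
with the same `B₁` differ by an orthogonal matrix commuting with a diagonal matrix with distinct
entries, i.e. by a diagonal matrix of signs (`exists_sign`).
-/

open Matrix

lemma aeval_genCharPoly {k R : Type*} [CommRing k] [CommRing R] [Algebra k R] {n r : ℕ}
    (A : Fin (r + 1) → Matrix (Fin n) (Fin n) k) (f : Fin (r + 1) → R) :
    MvPolynomial.aeval f (genCharPoly A) =
      Matrix.det (∑ i, f i • (A i).map (algebraMap k R)) := by
  unfold genCharPoly
  rw [AlgHom.map_det]
  congr 1
  ext a b
  simp [Matrix.sum_apply]

lemma det_zero_eq {k : Type*} [CommRing k] {n r : ℕ}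
    (A : Fin (r + 1) → Matrix (Fin n) (Fin n) k) :
    (A 0).det = MvPolynomial.aeval (Pi.single 0 1 : Fin (r + 1) → k) (genCharPoly A) := by
  rw [aeval_genCharPoly]
  congr 1
  rw [Finset.sum_eq_single 0]
  · ext a b; simp
  · intro b _ hb
    simp [hb]
  · simp

/-- The pencil is the specialisation of `P_A` at `(t, -1, 0, …, 0)`. -/
lemma pencilPoly_eq {k : Type*} [CommRing k] {n r : ℕ} (hr : 1 ≤ r)
    (A : Fin (r + 1) → Matrix (Fin n) (Fin n) k) :
    pencilPoly (A 0) (A 1) = MvPolynomial.aeval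
      ((Pi.single 0 Polynomial.X : Fin (r + 1) → Polynomial k) -
        (Pi.single 1 1 : Fin (r + 1) → Polynomial k))
      (genCharPoly A) := by
  obtain ⟨s, rfl⟩ : ∃ s, r = s + 1 := ⟨r - 1, by omega⟩
  rw [aeval_genCharPoly]
  unfold pencilPoly
  congr 1
  simp only [Pi.sub_apply, sub_smul, Finset.sum_sub_distrib]
  congr 1
  · rw [Finset.sum_eq_single 0]
    · ext a b; simp
    · intro b _ hb
      simp [hb]
    · simp
  · rw [Finset.sum_eq_single 1]
    · ext a b; simp
    · intro b _ hb
      simp [hb]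
    · simp

lemma genCharPoly_congruence {k : Type*} [CommRing k] {n r : ℕ}
    (B : Fin (r + 1) → Matrix (Fin n) (Fin n) k) (g : Matrix (Fin n) (Fin n) k) :
    genCharPoly (fun i => gᵀ * B i * g) = (g.det ^ 2) • genCharPoly B := by
  have h : (∑ i : Fin (r + 1), (MvPolynomial.X i : MvPolynomial (Fin (r + 1)) k) •
      ((gᵀ * B i * g).map MvPolynomial.C : Matrix (Fin n) (Fin n) (MvPolynomial (Fin (r + 1)) k)))
      = (g.map MvPolynomial.C)ᵀ * (∑ i : Fin (r + 1),
        (MvPolynomial.X i : MvPolynomial (Fin (r + 1)) k) • (B i).map MvPolynomial.C) *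
          g.map MvPolynomial.C := by
    simp [Finset.mul_sum, Finset.sum_mul, Matrix.map_mul, Matrix.transpose_map]
  have hd : (g.map (MvPolynomial.C : k →+* MvPolynomial (Fin (r + 1)) k)).det
      = MvPolynomial.C g.det := by
    rw [RingHom.map_det]; rfl
  unfold genCharPoly
  rw [h, Matrix.det_mul, Matrix.det_mul, Matrix.det_transpose, hd, MvPolynomial.smul_eq_C_mul,
    map_pow]
  ring

lemma eval_pencilPoly {k : Type*} [CommRing k] {n : ℕ} (M N : Matrix (Fin n) (Fin n) k) (t : k) :
    (pencilPoly M N).eval t = (t • M - N).det := by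
  unfold pencilPoly
  rw [← Polynomial.coe_evalRingHom, RingHom.map_det]
  congr 1
  ext a b
  simp
  exact mul_comm _ _

/-- Simultaneous reduction of a symmetric pencil with invertible `M` and simple spectrum `t`. -/
lemma exists_reducing {k : Type*} [Field k] [IsAlgClosed k] {n : ℕ}
    (M N : Matrix (Fin n) (Fin n) k) (hM : M.IsSymm) (hN : N.IsSymm) (h0 : M.det ≠ 0)
    (t : Fin n → k) (ht : Function.Injective t) (hroot : ∀ i, (t i • M - N).det = 0) :
    ∃ g : Matrix (Fin n) (Fin n) k, IsUnit g ∧ gᵀ * M * g = 1 ∧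
      gᵀ * N * g = Matrix.diagonal t := by
  have hex : ∀ i, ∃ v : Fin n → k, v ≠ 0 ∧ N *ᵥ v = t i • (M *ᵥ v) := by
    intro i
    obtain ⟨v, hv, h⟩ := Matrix.exists_mulVec_eq_zero_iff.mpr (hroot i)
    refine ⟨v, hv, ?_⟩
    rw [Matrix.sub_mulVec, Matrix.smul_mulVec, sub_eq_zero] at h
    exact h.symm
  choose v hv hNv using hex
  have hMu : IsUnit M.det := isUnit_iff_ne_zero.mpr h0
  have hli : LinearIndependent k v := by
    refine Module.End.eigenvectors_linearIndependent' (Matrix.toLin' (M⁻¹ * N)) t ht v ?_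
    intro i
    rw [Module.End.hasEigenvector_iff, Module.End.mem_eigenspace_iff]
    refine ⟨?_, hv i⟩
    rw [Matrix.toLin'_apply, ← Matrix.mulVec_mulVec, hNv, Matrix.mulVec_smul, Matrix.mulVec_mulVec,
      Matrix.nonsing_inv_mul _ hMu, Matrix.one_mulVec]
  let V : Matrix (Fin n) (Fin n) k := (Matrix.of v)ᵀ
  have hV : IsUnit V := by
    rw [← Matrix.linearIndependent_cols_iff_isUnit]
    exact hli
  have hNV : N * V = M * V * Matrix.diagonal t := by
    ext a b
    rw [Matrix.mul_diagonal]
    have := congrFun (hNv b) a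
    simp only [Matrix.mulVec, dotProduct, Pi.smul_apply, smul_eq_mul] at this
    simp only [Matrix.mul_apply, V, Matrix.transpose_apply, Matrix.of_apply]
    rw [this, mul_comm]
  have hQs : (Vᵀ * M * V)ᵀ = Vᵀ * M * V := by
    simp [Matrix.transpose_mul, hM.eq, Matrix.mul_assoc]
  have hRs : (Vᵀ * N * V)ᵀ = Vᵀ * N * V := by
    simp [Matrix.transpose_mul, hN.eq, Matrix.mul_assoc]
  have hR : Vᵀ * N * V = (Vᵀ * M * V) * Matrix.diagonal t := by
    rw [Matrix.mul_assoc, hNV]; simp only [Matrix.mul_assoc]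
  obtain ⟨q, hq⟩ : ∃ q, Vᵀ * M * V = Matrix.diagonal q := by
    refine ⟨fun i => (Vᵀ * M * V) i i, ?_⟩
    ext a b
    by_cases hab : a = b
    · subst hab; simp
    · rw [Matrix.diagonal_apply_ne _ hab]
      have h1 : (Vᵀ * M * V) b a * t a = (Vᵀ * M * V) a b * t b := by
        rw [← Matrix.mul_diagonal, ← Matrix.mul_diagonal, ← hR]
        conv_rhs => rw [← hRs]
        rfl
      have h2 : (Vᵀ * M * V) b a = (Vᵀ * M * V) a b := by
        conv_rhs => rw [← hQs]
        rfl
      rw [h2] at h1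
      by_contra hne
      exact hab (ht (mul_left_cancel₀ hne h1))
  have hVd : V.det ≠ 0 := by
    rw [Matrix.isUnit_iff_isUnit_det] at hV
    exact hV.ne_zero
  have hq0 : ∀ i, q i ≠ 0 := by
    have : (Vᵀ * M * V).det ≠ 0 := by
      rw [Matrix.det_mul, Matrix.det_mul, Matrix.det_transpose]
      exact mul_ne_zero (mul_ne_zero hVd h0) hVd
    rw [hq, Matrix.det_diagonal, Finset.prod_ne_zero_iff] at this
    exact fun i => this i (Finset.mem_univ i)
  have hsq : ∀ i, ∃ s : k, q i = s * s := fun i => IsAlgClosed.exists_eq_mul_self (q i)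
  choose s hs using hsq
  have hs0 : ∀ i, s i ≠ 0 := fun i h => hq0 i (by rw [hs, h, zero_mul])
  have hscale : ∀ X : Matrix (Fin n) (Fin n) k,
      (V * Matrix.diagonal s⁻¹)ᵀ * X * (V * Matrix.diagonal s⁻¹) =
        Matrix.diagonal s⁻¹ * (Vᵀ * X * V) * Matrix.diagonal s⁻¹ := by
    intro X
    simp [Matrix.transpose_mul, Matrix.mul_assoc]
  refine ⟨V * Matrix.diagonal s⁻¹, ?_, ?_, ?_⟩
  · rw [Matrix.isUnit_iff_isUnit_det, Matrix.det_mul, Matrix.det_diagonal, isUnit_iff_ne_zero]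
    exact mul_ne_zero hVd (Finset.prod_ne_zero_iff.mpr fun i _ => inv_ne_zero (hs0 i))
  · rw [hscale, hq, Matrix.diagonal_mul_diagonal, Matrix.diagonal_mul_diagonal,
      ← Matrix.diagonal_one]
    congr 1
    ext i
    have := hs0 i
    simp only [Pi.inv_apply, hs]
    field_simp
  · rw [hscale, hR, hq, Matrix.diagonal_mul_diagonal, Matrix.diagonal_mul_diagonal,
      Matrix.diagonal_mul_diagonal]
    congr 1
    ext i
    have := hs0 i
    simp only [Pi.inv_apply, hs]
    field_simp

/-- An orthogonal matrix fixing a diagonal matrix with distinct entries is a sign matrix. -/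
lemma exists_sign {k : Type*} [Field k] {n : ℕ} (h : Matrix (Fin n) (Fin n) k) (d : Fin n → k)
    (hd : Function.Injective d) (h1 : hᵀ * h = 1)
    (h2 : hᵀ * Matrix.diagonal d * h = Matrix.diagonal d) :
    ∃ e : Fin n → k, (∀ i, e i = 1 ∨ e i = -1) ∧ h = Matrix.diagonal e := by
  have h1' : h * hᵀ = 1 := mul_eq_one_comm.mp h1
  have hc : Matrix.diagonal d * h = h * Matrix.diagonal d := by
    conv_rhs => rw [← h2]
    rw [← Matrix.mul_assoc, ← Matrix.mul_assoc, h1', Matrix.one_mul]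
  have hdiag : h = Matrix.diagonal (fun i => h i i) := by
    ext a b
    by_cases hab : a = b
    · subst hab; simp
    · rw [Matrix.diagonal_apply_ne _ hab]
      have := congrFun (congrFun hc a) b
      rw [Matrix.diagonal_mul, Matrix.mul_diagonal, mul_comm] at this
      by_contra hne
      exact hab (hd (mul_left_cancel₀ hne this))
  refine ⟨fun i => h i i, fun i => ?_, hdiag⟩
  rw [hdiag, Matrix.diagonal_transpose, Matrix.diagonal_mul_diagonal] at h1
  have := congrFun (congrFun h1 i) i
  simp only [Matrix.diagonal_apply_eq, Matrix.one_apply_eq] at this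
  exact mul_self_eq_one_iff.mp this

/-- A class contains finitely many reduced tuples with prescribed first entry. -/
lemma finite_reduced_in_class {k : Type*} [Field k] {n r : ℕ}
    (B' : Fin (r + 1) → Matrix (Fin n) (Fin n) k) (d : Fin n → k) (hd : Function.Injective d) :
    {B : Fin (r + 1) → Matrix (Fin n) (Fin n) k | B 0 = 1 ∧ B 1 = Matrix.diagonal d ∧
      ∃ g : Matrix (Fin n) (Fin n) k, IsUnit g ∧ ∀ i, B' i = gᵀ * B i * g}.Finite := by
  rcases Set.eq_empty_or_nonempty {B : Fin (r + 1) → Matrix (Fin n) (Fin n) k | B 0 = 1 ∧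
      B 1 = Matrix.diagonal d ∧
      ∃ g : Matrix (Fin n) (Fin n) k, IsUnit g ∧ ∀ i, B' i = gᵀ * B i * g} with he | ⟨B, hB⟩
  · rw [he]; exact Set.finite_empty
  obtain ⟨hB0, hB1, g, hg, hgB⟩ := hB
  have hfin : (Set.pi Set.univ (fun _ : Fin n => ({1, -1} : Set k))).Finite :=
    Set.Finite.pi' (fun _ => by simp) |>.subset (fun x hx i => hx i (Set.mem_univ i))
  refine (hfin.image (fun e i => (Matrix.diagonal e)ᵀ * B i * Matrix.diagonal e)).subset ?_
  rintro C ⟨hC0, hC1, f, hf, hfC⟩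
  rw [Matrix.isUnit_iff_isUnit_det] at hf hg
  have key : ∀ i, C i = (g * f⁻¹)ᵀ * B i * (g * f⁻¹) := by
    intro i
    have e1 : f * f⁻¹ = 1 := Matrix.mul_nonsing_inv _ hf
    have e2 : (f⁻¹)ᵀ * fᵀ = 1 := by rw [← Matrix.transpose_mul, e1, Matrix.transpose_one]
    calc C i = ((f⁻¹)ᵀ * fᵀ) * C i * (f * f⁻¹) := by rw [e1, e2]; simp
      _ = (f⁻¹)ᵀ * (fᵀ * C i * f) * f⁻¹ := by simp only [Matrix.mul_assoc]
      _ = (f⁻¹)ᵀ * (gᵀ * B i * g) * f⁻¹ := by rw [← hfC, hgB]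
      _ = _ := by simp only [Matrix.transpose_mul, Matrix.mul_assoc]
  obtain ⟨e, he, hh⟩ := exists_sign (g * f⁻¹) d hd
    (by have := key 0; rw [hC0, hB0, Matrix.mul_one] at this; exact this.symm)
    (by have := key 1; rw [hC1, hB1] at this; exact this.symm)
  refine ⟨e, fun i _ => he i, ?_⟩
  funext i
  rw [key i, hh]

/-- **Proposition 3.1, (a) ⇔ (b) (fixed-tuple version).** For a symmetric tuple
`A ∈ U_{r,n}`, the following are equivalent: (i) there are only finitely many equivalence
classes of symmetric tuples `B` with `P_B` a nonzero scalar multiple of `P_A` (encoded by a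
finite transversal `S`); (ii) there are only finitely many reduced tuples `B` with `P_B` a
nonzero scalar multiple of `P_A`. -/
theorem finitely_many_classes_iff_finitely_many_reduced
    (k : Type*) [Field k] [IsAlgClosed k] (hk : ringChar k ≠ 2)
    (n r : ℕ) (hn : 1 ≤ n) (hr : 1 ≤ r)
    (A : Fin (r + 1) → Matrix (Fin n) (Fin n) k)
    (hA : ∀ i, (A i).IsSymm)
    (h0 : (A 0).det ≠ 0)
    (h1 : hasNDistinctRoots (pencilPoly (A 0) (A 1)) n) :
    (∃ S : Finset (Fin (r + 1) → Matrix (Fin n) (Fin n) k),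
        ∀ B : Fin (r + 1) → Matrix (Fin n) (Fin n) k, (∀ i, (B i).IsSymm) →
          (∃ c : k, c ≠ 0 ∧ genCharPoly B = c • genCharPoly A) →
          ∃ B' ∈ S, ∃ g : Matrix (Fin n) (Fin n) k,
            IsUnit g ∧ ∀ i, B' i = gᵀ * B i * g) ↔
      {B : Fin (r + 1) → Matrix (Fin n) (Fin n) k |
        IsReducedTuple B ∧ ∃ c : k, c ≠ 0 ∧ genCharPoly B = c • genCharPoly A}.Finite := by
  classical
  have hpencil : ∀ (B : Fin (r + 1) → Matrix (Fin n) (Fin n) k) (c : k),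
      genCharPoly B = c • genCharPoly A →
      pencilPoly (B 0) (B 1) = c • pencilPoly (A 0) (A 1) := by
    intro B c h
    rw [pencilPoly_eq hr, pencilPoly_eq hr, h, map_smul]
  have hcard : (pencilPoly (A 0) (A 1)).roots.toFinset.card = n := by
    unfold hasNDistinctRoots at h1
    convert h1
  constructor
  · rintro ⟨S, hS⟩
    have hp0 : pencilPoly (A 0) (A 1) ≠ 0 := by
      intro h
      rw [h] at hcard
      simp at hcard
      omega
    -- the possible diagonals of the first entry
    let T : Set (Fin n → k) :=
      {d | Function.Injective d ∧ ∀ i, d i ∈ (pencilPoly (A 0) (A 1)).roots.toFinset}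
    have hT : T.Finite :=
      (Set.Finite.pi' (fun _ : Fin n =>
        (pencilPoly (A 0) (A 1)).roots.toFinset.finite_toSet)).subset (fun d hd i => hd.2 i)
    refine ((S.finite_toSet.biUnion fun B' _ => hT.biUnion fun d hd =>
      finite_reduced_in_class B' d hd.1)).subset ?_
    rintro B ⟨⟨hs, hB0, d, hd, hB1⟩, c, hc, hP⟩
    obtain ⟨B', hB', hg⟩ := hS B hs ⟨c, hc, hP⟩
    simp only [Set.mem_iUnion]
    refine ⟨B', hB', d, ⟨hd, fun i => ?_⟩, hB0, hB1, hg⟩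
    rw [Multiset.mem_toFinset, Polynomial.mem_roots hp0, Polynomial.IsRoot]
    have h := congrArg (Polynomial.eval (d i)) (hpencil B c hP)
    rw [eval_pencilPoly, hB0, hB1, Polynomial.eval_smul, smul_eq_mul, Matrix.smul_one_eq_diagonal,
      Matrix.diagonal_sub, Matrix.det_diagonal,
      Finset.prod_eq_zero (Finset.mem_univ i) (sub_self _)] at h
    exact (mul_eq_zero.mp h.symm).resolve_left hc
  · intro hfin
    refine ⟨hfin.toFinset, ?_⟩
    rintro B hs ⟨c, hc, hP⟩
    have hdet : (B 0).det ≠ 0 := by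
      rw [det_zero_eq, hP, map_smul, ← det_zero_eq]
      exact smul_ne_zero hc h0
    let t : Fin n → k := fun i =>
      ((pencilPoly (A 0) (A 1)).roots.toFinset.equivFinOfCardEq hcard).symm i
    have ht : Function.Injective t := Subtype.val_injective.comp (Equiv.injective _)
    have hroot : ∀ i, (t i • B 0 - B 1).det = 0 := by
      intro i
      rw [← eval_pencilPoly, hpencil B c hP, Polynomial.eval_smul]
      have hm : t i ∈ (pencilPoly (A 0) (A 1)).roots.toFinset := Subtype.property _
      rw [Multiset.mem_toFinset] at hm
      rw [(Polynomial.isRoot_of_mem_roots hm).eq_zero, smul_zero]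
    obtain ⟨g, hg, hg0, hg1⟩ := exists_reducing (B 0) (B 1) (hs 0) (hs 1) hdet t ht hroot
    refine ⟨fun i => gᵀ * B i * g, ?_, g, hg, fun i => rfl⟩
    rw [Set.Finite.mem_toFinset]
    refine ⟨⟨fun i => ?_, hg0, t, ht, hg1⟩, g.det ^ 2 * c, ?_, ?_⟩
    · simp [Matrix.IsSymm, Matrix.transpose_mul, (hs i).eq, Matrix.mul_assoc]
    · rw [Matrix.isUnit_iff_isUnit_det] at hg
      exact mul_ne_zero (pow_ne_zero _ hg.ne_zero) hc
    · rw [genCharPoly_congruence, hP, smul_smul]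
end

section
/- Let k be an algebraically closed field of characteristic ≠ 2, n ≥ 2, r ≥ 1. Suppose A_0, A_1, …, A_r are symmetric n×n matrices over k which span the k-vector space Symm_n(k) of symmetric n×n matrices, and suppose A_{r+1} and B_{r+1} are symmetric n×n matrices such that det(x_0 A_0 + … + x_r A_r + x_{r+1} A_{r+1}) = det(x_0 A_0 + … + x_r A_r + x_{r+1} B_{r+1}) as polynomials in x_0,…,x_{r+1}. Then B_{r+1} = A_{r+1}. -/
/-!
Evaluating the hypothesis at `x_{r+1} = 1`, and using that `A₀, …, A_r` span the symmetric
matrices, gives `det (S + A_{r+1}) = det (S + B_{r+1})` for every symmetric `S`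
(`det_add_eq_of_genCharPoly_eq`). With `D = B_{r+1} - A_{r+1}` this says
`det X = det (X + D)` for every symmetric `X`.

In particular `det (1 + D) = 1`. Taking `X = 1 + v vᵀ` and applying the matrix determinant lemma
to both sides yields `1 + vᵀ v = 1 + vᵀ (1 + D)⁻¹ v` for every vector `v`. So the symmetric
matrix `(1 + D)⁻¹ - 1` has zero quadratic form, and by polarization in characteristic `≠ 2` it
vanishes; hence `D = 0`.
-/

open Matrix

theorem eval_genCharPoly_snoc {k : Type*} [Field k] {n r : ℕ}
    (A : Fin (r + 1) → Matrix (Fin n) (Fin n) k) (L : Matrix (Fin n) (Fin n) k)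
    (c : Fin (r + 1) → k) :
    MvPolynomial.eval (Fin.snoc c 1 : Fin (r + 2) → k)
        (genCharPoly (Fin.snoc A L : Fin (r + 2) → Matrix (Fin n) (Fin n) k))
      = ((∑ i, c i • A i) + L).det := by
  unfold genCharPoly
  rw [RingHom.map_det]
  congr 1
  ext a b
  simp [Fin.sum_univ_castSucc, Matrix.sum_apply, Matrix.add_apply]

theorem det_add_eq_of_genCharPoly_eq {k : Type*} [Field k] {n r : ℕ}
    {A : Fin (r + 1) → Matrix (Fin n) (Fin n) k} {L M S : Matrix (Fin n) (Fin n) k}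
    (hS : S ∈ Submodule.span k (Set.range A))
    (h : genCharPoly (Fin.snoc A L : Fin (r + 2) → Matrix (Fin n) (Fin n) k)
      = genCharPoly (Fin.snoc A M : Fin (r + 2) → Matrix (Fin n) (Fin n) k)) :
    (S + L).det = (S + M).det := by
  obtain ⟨c, rfl⟩ := (Submodule.mem_span_range_iff_exists_fun k).1 hS
  rw [← eval_genCharPoly_snoc, ← eval_genCharPoly_snoc, h]

theorem eq_zero_of_isSymm_of_quadratic {k : Type*} [Field k] (h2 : (2 : k) ≠ 0) {n : ℕ}
    {M : Matrix (Fin n) (Fin n) k} (hM : M.IsSymm) (h : ∀ v, v ⬝ᵥ M *ᵥ v = 0) : M = 0 := by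
  ext i j
  have hi := h (Pi.single i 1)
  have hj := h (Pi.single j 1)
  have hij := h (Pi.single i 1 + Pi.single j 1)
  have hs := hM.apply i j
  simp [Matrix.mulVec_add] at hi hj hij
  rw [hi, hj, hs] at hij
  have : 2 * M i j = 0 := by linear_combination hij
  simpa [h2] using this

/-- Matrix determinant lemma for the symmetric rank-one update `v vᵀ` of a matrix of
determinant one. -/
theorem det_add_vecMulVec_self {k : Type*} [Field k] {n : ℕ}
    {Y : Matrix (Fin n) (Fin n) k} (hY : Y.det = 1) (v : Fin n → k) :
    (Y + vecMulVec v v).det = 1 + v ⬝ᵥ Y⁻¹ *ᵥ v := by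
  have hu : IsUnit Y.det := by simp [hY]
  rw [vecMulVec_eq Unit, det_add_replicateCol_mul_replicateRow hu, hY, one_mul]
  simp [Matrix.mul_apply, dotProduct, mulVec, Matrix.det_unique, Finset.sum_mul, Finset.mul_sum]
  rw [Finset.sum_comm]
  simp [mul_assoc]

theorem eq_zero_of_det_add_eq {k : Type*} [Field k] (h2 : (2 : k) ≠ 0) {n : ℕ}
    {D : Matrix (Fin n) (Fin n) k} (hD : D.IsSymm)
    (h : ∀ X : Matrix (Fin n) (Fin n) k, X.IsSymm → X.det = (X + D).det) : D = 0 := by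
  have h1 : (1 : Matrix (Fin n) (Fin n) k).IsSymm := isSymm_one
  have hdet : (1 + D).det = 1 := by rw [← h 1 h1, det_one]
  have hE : (1 + D)⁻¹ - 1 = 0 := by
    refine eq_zero_of_isSymm_of_quadratic h2 ((h1.add hD).inv.sub h1) fun v => ?_
    have hv : (vecMulVec v v).IsSymm := transpose_vecMulVec v v
    have := h _ (h1.add hv)
    rw [det_add_vecMulVec_self det_one, add_right_comm, det_add_vecMulVec_self hdet,
      inv_one] at this
    rw [sub_mulVec, dotProduct_sub]
    linear_combination -this
  have hmul : (1 + D) * (1 + D)⁻¹ = 1 := mul_nonsing_inv _ (by simp [hdet])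
  rw [sub_eq_zero.1 hE, mul_one] at hmul
  simpa using hmul

/-- **Key claim in the proof of Proposition 5.1.** Suppose the symmetric matrices
`A₀, …, A_r` span `Symm_n(k)`, and `A_{r+1}`, `B_{r+1}` are symmetric matrices such that
`det(x₀A₀ + … + x_rA_r + x_{r+1}A_{r+1}) = det(x₀A₀ + … + x_rA_r + x_{r+1}B_{r+1})` as
polynomials in `x₀, …, x_{r+1}`. Then `B_{r+1} = A_{r+1}`. -/
theorem last_matrix_determined_of_span
    (k : Type*) [Field k] [IsAlgClosed k] (hk : ringChar k ≠ 2)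
    (n r : ℕ) (hn : 2 ≤ n) (hr : 1 ≤ r)
    (A : Fin (r + 1) → Matrix (Fin n) (Fin n) k)
    (hA : ∀ i, (A i).IsSymm)
    (hspan : ∀ X : Matrix (Fin n) (Fin n) k, X.IsSymm → X ∈ Submodule.span k (Set.range A))
    (Alast Blast : Matrix (Fin n) (Fin n) k)
    (hAlast : Alast.IsSymm) (hBlast : Blast.IsSymm)
    (h : genCharPoly (Fin.snoc A Alast) = genCharPoly (Fin.snoc A Blast)) :
    Blast = Alast := by
  refine sub_eq_zero.1 (eq_zero_of_det_add_eq (Ring.two_ne_zero hk) (hBlast.sub hAlast) ?_)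
  intro X hX
  have := det_add_eq_of_genCharPoly_eq (hspan _ (hX.sub hAlast)) h
  rwa [sub_add_cancel, sub_add_eq_add_sub, add_sub_assoc] at this
end
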